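/- arXiv:1302.4251 — 6 statements merged into one kernel-verified Lean document; each statement's English description precedes it below -/
import Mathlib

section
/- Let s ∈ ℕ and let q be a prime number. Then there exists a constant c = c(q,s) > 0, depending only on q and s, such that for μ_s-almost all s-tuples (C₁,…,C_s) ∈ ((ZMod q)^{ℕ×ℕ})^s of generating matrices, the digital sequence S(C₁,…,C_s) over ZMod q has star discrepancy satisfying D*_N(S(C₁,…,C_s)) ≥ c · (log N)^s · log log N for infinitely many N ∈ ℕ. -/
open MeasureTheory Filter
open scoped ENNReal

noncomputable section

/-- The base-`q` digit vector `k⃗ = (κ₀, κ₁, κ₂, …)` of a natural number `k`,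
with values in `ZMod q`. -/
def digitVec (q k : ℕ) : ℕ → ZMod q := fun i => ((k / q ^ i) % q : ℕ)

/-- `len q k = ⌊log_q k⌋`, the index of the leading base-`q` digit of `k`. -/
def len (q k : ℕ) : ℕ := Nat.log q k

/-- Transpose of an `ℕ × ℕ` matrix over `ZMod q`. -/
def transp {q : ℕ} (C : ℕ → ℕ → ZMod q) : ℕ → ℕ → ZMod q := fun i j => C j i

/-- The matrix `C` applied to the digit vector of `k` (a finite sum, since the digit
vector of `k` is supported on indices `≤ k`), all arithmetic modulo `q`. -/
def matVec {q : ℕ} (C : ℕ → ℕ → ZMod q) (k : ℕ) : ℕ → ZMod q :=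
  fun i => ∑ j ∈ Finset.range (k + 1), C i j * digitVec q k j

/-- `nuLe b m` expresses `ν(b⃗) ≤ -m` for `b⃗ = (b₁, b₂, …) = (b 0, b 1, …)`:
the first `m - 1` coordinates of `b⃗` vanish.  (In particular it holds for `b⃗ = 0⃗`,
where `ν(0⃗) = -∞`.) -/
def nuLe {q : ℕ} (b : ℕ → ZMod q) (m : ℕ) : Prop := ∀ i, i < m - 1 → b i = 0

/-- `ω_q = exp(2πi/q)`. -/
def omega (q : ℕ) : ℂ := Complex.exp (2 * Real.pi * Complex.I / q)

/-- The value of the `j`-th `q`-adic Walsh function on a digit vector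
`v⃗ = (v₁, v₂, …) = (v 0, v 1, …)`: with `j = j₀ + j₁ q + ⋯`, this is
`ω_q^(j₀ v₁ + j₁ v₂ + ⋯)`, the exponent computed in `ZMod q` (a finite sum, since all
base-`q` digits of `j` with index `≥ j` vanish). -/
def wal (q j : ℕ) (v : ℕ → ZMod q) : ℂ :=
  omega q ^ (∑ i ∈ Finset.range (j + 1), digitVec q j i * v i).val

/-- The digit `ξ_{i+1} ∈ ZMod q` of the `q`-adic expansion
`x = ξ₁ q⁻¹ + ξ₂ q⁻² + ⋯` of `x ∈ [0,1)` (the expansion with infinitely many digits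
different from `q - 1`). -/
def realDigit (q : ℕ) (x : ℝ) : ℕ → ZMod q := fun i => ((⌊x * (q : ℝ) ^ (i + 1)⌋ : ℤ) : ZMod q)

/-- The `j`-th `q`-adic Walsh function `wal_j : [0,1) → ℂ`. -/
def walReal (q j : ℕ) (x : ℝ) : ℂ := wal q j (realDigit q x)

/-- The digital sequence over `ZMod q` with generating matrices `C 1, …, C s`:
the `j`-th coordinate of the `n`-th point is `x_{n,j} = Σ_i (C_j n⃗)_i q^{-(i+1)}`. -/
def digitalSeq {q s : ℕ} (C : Fin s → ℕ → ℕ → ZMod q) (n : ℕ) : Fin s → ℝ :=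
  fun j => ∑' i : ℕ, ((matVec (C j) n i).val : ℝ) / (q : ℝ) ^ (i + 1)

/-- The local discrepancy `D(x, N)` of the sequence `y` in `[0,1)^s`. -/
def localDisc {s : ℕ} (y : ℕ → Fin s → ℝ) (x : Fin s → ℝ) (N : ℕ) : ℝ :=
  (Nat.card {n : ℕ | n < N ∧ ∀ j, y n j ∈ Set.Ico 0 (x j)} : ℝ) - N * ∏ j, x j

/-- The star discrepancy `D*_N` of the sequence `y` in `[0,1)^s`. -/
def starDisc {s : ℕ} (y : ℕ → Fin s → ℝ) (N : ℕ) : ℝ :=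
  sSup {d : ℝ | ∃ x : Fin s → ℝ, (∀ j, x j ∈ Set.Icc (0 : ℝ) 1) ∧ d = |localDisc y x N|}

/-- `IsUniformMatrixMeasure μ` says that `μ` is the measure `μ` of the paper on the
space `(ZMod q)^{ℕ×ℕ}` of `ℕ × ℕ` matrices over `ZMod q`: the product over `ℕ × ℕ` of
uniform probability measures on `ZMod q`, characterized as the probability measure
giving each finite cylinder set (finitely many prescribed entries) the measure
`q^{-(number of prescribed entries)}`. -/
def IsUniformMatrixMeasure {q : ℕ} (μ : Measure (ℕ → ℕ → ZMod q)) : Prop :=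
  IsProbabilityMeasure μ ∧
    ∀ (F : Finset (ℕ × ℕ)) (g : ℕ × ℕ → ZMod q),
      μ {C | ∀ p ∈ F, C p.1 p.2 = g p} = ((q : ℝ≥0∞)⁻¹) ^ F.card

/-- `IsUniformMatrixTupleMeasure μs` says that `μs` is the measure `μ_s` of the paper on
the space `((ZMod q)^{ℕ×ℕ})^s` of `s`-tuples of `ℕ × ℕ` matrices over `ZMod q`: the
`s`-fold product of the product over `ℕ × ℕ` of uniform probability measures on
`ZMod q`, characterized as the probability measure giving each finite cylinder set
(finitely many prescribed entries) the measure `q^{-(number of prescribed entries)}`. -/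
def IsUniformMatrixTupleMeasure {q s : ℕ} (μs : Measure (Fin s → ℕ → ℕ → ZMod q)) : Prop :=
  IsProbabilityMeasure μs ∧
    ∀ (F : Finset (Fin s × ℕ × ℕ)) (g : Fin s × ℕ × ℕ → ZMod q),
      μs {C | ∀ p ∈ F, C p.1 p.2.1 p.2.2 = g p} = ((q : ℝ≥0∞)⁻¹) ^ F.card

/-- Second-moment bound for pairwise independent events. -/
theorem sm_bound {Ω ι : Type*} [MeasurableSpace Ω] (μ : Measure Ω) [IsProbabilityMeasure μ]
    (E : ι → Set Ω) (K : Finset ι) (hE : ∀ i ∈ K, MeasurableSet (E i))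
    (hp : ∀ i ∈ K, ∀ j ∈ K, i ≠ j → μ.real (E i ∩ E j) = μ.real (E i) * μ.real (E j))
    (B : Set Ω) (hBm : MeasurableSet B) (hB : ∀ ω ∈ B, ∀ i ∈ K, ω ∉ E i) :
    μ.real B * (∑ i ∈ K, μ.real (E i)) ^ 2 ≤ ∑ i ∈ K, μ.real (E i) := by
  classical
  set S := ∑ i ∈ K, μ.real (E i) with hS
  let Y : ι → Ω → ℝ := fun i ω => (E i).indicator 1 ω - μ.real (E i)
  have hint : ∀ i ∈ K, Integrable ((E i).indicator (1 : Ω → ℝ)) μ := fun i hi =>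
    (integrable_const (1:ℝ)).indicator (hE i hi)
  have hYY : ∀ i ∈ K, ∀ j ∈ K, (fun ω => Y i ω * Y j ω) = fun ω =>
      (E i ∩ E j).indicator (1 : Ω → ℝ) ω - μ.real (E j) * (E i).indicator 1 ω
        - μ.real (E i) * (E j).indicator 1 ω + μ.real (E i) * μ.real (E j) := by
    intro i hi j hj
    funext ω
    simp only [Y, Set.indicator, Set.mem_inter_iff, Pi.one_apply]
    by_cases h1 : ω ∈ E i <;> by_cases h2 : ω ∈ E j <;> simp [h1, h2] <;> ring
  have hintIJ : ∀ i ∈ K, ∀ j ∈ K, Integrable ((E i ∩ E j).indicator (1 : Ω → ℝ)) μ :=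
    fun i hi j hj => (integrable_const (1:ℝ)).indicator ((hE i hi).inter (hE j hj))
  have hYI : ∀ i ∈ K, ∀ j ∈ K, Integrable (fun ω => Y i ω * Y j ω) μ := by
    intro i hi j hj
    rw [hYY i hi j hj]
    exact (((hintIJ i hi j hj).sub ((hint i hi).const_mul _)).sub ((hint j hj).const_mul _)).add
      (integrable_const _)
  have hval : ∀ i ∈ K, ∀ j ∈ K, ∫ ω, Y i ω * Y j ω ∂μ
      = μ.real (E i ∩ E j) - μ.real (E i) * μ.real (E j) := by
    intro i hi j hj
    rw [hYY i hi j hj]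
    have i1 : Integrable (fun ω => (E i ∩ E j).indicator (1 : Ω → ℝ) ω) μ := hintIJ i hi j hj
    have i2 : Integrable (fun ω => μ.real (E j) * (E i).indicator (1 : Ω → ℝ) ω) μ :=
      (hint i hi).const_mul _
    have i3 : Integrable (fun ω => μ.real (E i) * (E j).indicator (1 : Ω → ℝ) ω) μ :=
      (hint j hj).const_mul _
    have i4 : Integrable (fun ω => (E i ∩ E j).indicator (1 : Ω → ℝ) ω
        - μ.real (E j) * (E i).indicator (1 : Ω → ℝ) ω) μ := i1.sub i2
    have i5 : Integrable (fun ω => (E i ∩ E j).indicator (1 : Ω → ℝ) ω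
        - μ.real (E j) * (E i).indicator (1 : Ω → ℝ) ω
        - μ.real (E i) * (E j).indicator (1 : Ω → ℝ) ω) μ := i4.sub i3
    rw [integral_add i5 (integrable_const _), integral_sub i4 i3, integral_sub i1 i2,
      integral_const_mul, integral_const_mul,
      integral_indicator_one ((hE i hi).inter (hE j hj)),
      integral_indicator_one (hE i hi), integral_indicator_one (hE j hj)]
    simp
    ring
  have hsq : ∀ ω, (∑ i ∈ K, Y i ω) ^ 2 = ∑ i ∈ K, ∑ j ∈ K, Y i ω * Y j ω := by
    intro ω
    rw [sq, Finset.sum_mul_sum]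
  have hI : ∫ ω, (∑ i ∈ K, Y i ω) ^ 2 ∂μ ≤ S := by
    simp_rw [hsq]
    rw [integral_finsetSum _ (fun i hi => integrable_finsetSum _ (fun j hj => hYI i hi j hj))]
    rw [hS]
    refine Finset.sum_le_sum fun i hi => ?_
    rw [integral_finsetSum _ (fun j hj => hYI i hi j hj)]
    rw [Finset.sum_eq_single i]
    · rw [hval i hi i hi, Set.inter_self]
      nlinarith [measureReal_nonneg (μ := μ) (s := E i)]
    · intro j hj hne
      rw [hval i hi j hj, hp i hi j hj hne.symm, sub_self]
    · intro h; exact absurd hi h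
  have hB2 : ∫ ω, B.indicator (fun _ => S ^ 2) ω ∂μ ≤ ∫ ω, (∑ i ∈ K, Y i ω) ^ 2 ∂μ := by
    refine integral_mono ((integrable_const _).indicator hBm) ?_ ?_
    · simp_rw [hsq]
      exact integrable_finsetSum _ (fun i hi => integrable_finsetSum _ (fun j hj => hYI i hi j hj))
    · intro ω
      by_cases h : ω ∈ B
      · have : ∑ i ∈ K, Y i ω = - S := by
          rw [hS, ← Finset.sum_neg_distrib]
          refine Finset.sum_congr rfl fun i hi => ?_
          simp [Y, hB ω h i hi]
        simp [h, this]
      · simp [h]; positivity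
  rw [integral_indicator_const _ hBm] at hB2
  simpa using hB2.trans hI

section cyl

variable {q s : ℕ}

/-- An event depends only on the entries in `F`. -/
def DepOn (F : Finset (Fin s × ℕ × ℕ)) (A : Set (Fin s → ℕ → ℕ → ZMod q)) : Prop :=
  ∀ C C', (∀ p ∈ F, C p.1 p.2.1 p.2.2 = C' p.1 p.2.1 p.2.2) → (C ∈ A → C' ∈ A)

/-- Extension by zero. -/
def extZ (F : Finset (Fin s × ℕ × ℕ)) (g : F → ZMod q) : Fin s → ℕ → ℕ → ZMod q :=
  fun j l i => by
    classical
    exact if h : (j, l, i) ∈ F then g ⟨(j, l, i), h⟩ else 0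

theorem extZ_apply (F : Finset (Fin s × ℕ × ℕ)) (g : F → ZMod q) (p) (hp : p ∈ F) :
    extZ F g p.1 p.2.1 p.2.2 = g ⟨p, hp⟩ := by
  simp [extZ, hp]

theorem cyl_meas (F : Finset (Fin s × ℕ × ℕ)) (g : Fin s × ℕ × ℕ → ZMod q) :
    MeasurableSet {C : Fin s → ℕ → ℕ → ZMod q | ∀ p ∈ F, C p.1 p.2.1 p.2.2 = g p} := by
  have : {C : Fin s → ℕ → ℕ → ZMod q | ∀ p ∈ F, C p.1 p.2.1 p.2.2 = g p}
      = ⋂ p ∈ F, {C | C p.1 p.2.1 p.2.2 = g p} := by ext; simp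
  rw [this]
  refine Finset.measurableSet_biInter _ fun p hp => ?_
  have : Measurable (fun C : Fin s → ℕ → ℕ → ZMod q => C p.1 p.2.1 p.2.2) := by fun_prop
  exact this (measurableSet_singleton (g p))

theorem dep_eq [NeZero q] (F : Finset (Fin s × ℕ × ℕ)) (A : Set (Fin s → ℕ → ℕ → ZMod q))
    (hA : DepOn F A) [DecidablePred fun g : F → ZMod q => extZ F g ∈ A] :
    A = ⋃ g ∈ Finset.univ.filter (fun g : F → ZMod q => extZ F g ∈ A),
      {C | ∀ p ∈ F, C p.1 p.2.1 p.2.2 = extZ F g p.1 p.2.1 p.2.2} := by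
  ext C
  simp only [Finset.mem_filter, Finset.mem_univ, true_and, Set.mem_iUnion, Set.mem_ofPred_eq,
    exists_prop]
  constructor
  · intro h
    have h2 : ∀ p ∈ F, C p.1 p.2.1 p.2.2
        = extZ F (fun p : F => C p.1.1 p.1.2.1 p.1.2.2) p.1 p.2.1 p.2.2 :=
      fun p hp => (extZ_apply F (fun p : F => C p.1.1 p.1.2.1 p.1.2.2) p hp).symm
    exact ⟨_, hA _ _ h2 h, h2⟩
  · rintro ⟨g, hg, h⟩
    exact hA _ _ (fun p hp => (h p hp).symm) hg

theorem dep_meas [NeZero q] (F : Finset (Fin s × ℕ × ℕ)) (A : Set (Fin s → ℕ → ℕ → ZMod q))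
    (hA : DepOn F A) : MeasurableSet A := by
  classical
  rw [dep_eq F A hA]
  exact Finset.measurableSet_biUnion _ fun g _ => cyl_meas F (fun p => extZ F g p.1 p.2.1 p.2.2)

theorem dep_measure [NeZero q] (μs : Measure (Fin s → ℕ → ℕ → ZMod q))
    (hμs : IsUniformMatrixTupleMeasure μs)
    (F : Finset (Fin s × ℕ × ℕ)) (A : Set (Fin s → ℕ → ℕ → ZMod q))
    (hA : DepOn F A) [DecidablePred fun g : F → ZMod q => extZ F g ∈ A] :
    μs A = ∑ g : F → ZMod q, if extZ F g ∈ A then ((q : ℝ≥0∞)⁻¹) ^ F.card else 0 := by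
  have h0 := congrArg μs (dep_eq F A hA)
  rw [h0, measure_biUnion_finset]
  · rw [← Finset.sum_filter]
    exact Finset.sum_congr rfl fun g _ => hμs.2 F (fun p => extZ F g p.1 p.2.1 p.2.2)
  · intro g _ g' _ hne
    refine Set.disjoint_left.2 fun C h h' => hne ?_
    funext p
    have := (h p.1 p.2).symm.trans (h' p.1 p.2)
    rwa [extZ_apply F g p.1 p.2, extZ_apply F g' p.1 p.2] at this
  · intro g _
    exact cyl_meas F (fun p => extZ F g p.1 p.2.1 p.2.2)

theorem dep_translate [NeZero q] (μs : Measure (Fin s → ℕ → ℕ → ZMod q))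
    (hμs : IsUniformMatrixTupleMeasure μs)
    (F : Finset (Fin s × ℕ × ℕ)) (A : Set (Fin s → ℕ → ℕ → ZMod q))
    (hA : DepOn F A) (D : Fin s → ℕ → ℕ → ZMod q) :
    μs A = μs {C | C + D ∈ A} := by
  classical
  have hA' : DepOn F {C | C + D ∈ A} := by
    intro C C' h hC
    refine hA (C + D) (C' + D) (fun p hp => ?_) hC
    simp [h p hp]
  rw [dep_measure μs hμs F A hA, dep_measure μs hμs F _ hA']
  rw [← Equiv.sum_comp (Equiv.addRight (fun p : F => D p.1.1 p.1.2.1 p.1.2.2))]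
  refine Finset.sum_congr rfl fun g _ => ?_
  have hag : ∀ p ∈ F, extZ F (g + fun p : F => D p.1.1 p.1.2.1 p.1.2.2) p.1 p.2.1 p.2.2
      = (extZ F g + D) p.1 p.2.1 p.2.2 := by
    intro p hp
    rw [extZ_apply F _ p hp]
    simp [extZ_apply F g p hp]
  have : extZ F (g + fun p : F => D p.1.1 p.1.2.1 p.1.2.2) ∈ A ↔ extZ F g + D ∈ A :=
    ⟨hA _ _ hag, hA _ _ (fun p hp => (hag p hp).symm)⟩
  simp only [Equiv.coe_addRight, this, Set.mem_ofPred_eq]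

theorem surj_measure [NeZero q] (μs : Measure (Fin s → ℕ → ℕ → ZMod q))
    (hμs : IsUniformMatrixTupleMeasure μs) {W : Type*} [AddCommGroup W] [Fintype W]
    (F : Finset (Fin s × ℕ × ℕ)) (Φ : (Fin s → ℕ → ℕ → ZMod q) → W)
    (hΦ : ∀ C C', (∀ p ∈ F, C p.1 p.2.1 p.2.2 = C' p.1 p.2.1 p.2.2) → Φ C = Φ C')
    (hadd : ∀ C D, Φ (C + D) = Φ C + Φ D) (hs : ∀ w, ∃ D, Φ D = w) :
    μs.real {C | Φ C = 0} = (Fintype.card W : ℝ)⁻¹ := by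
  have hprob := hμs.1
  have hdep : ∀ w, DepOn F (Φ ⁻¹' {w}) := fun w C C' h hC => by
    simp only [Set.mem_preimage, Set.mem_singleton_iff] at hC ⊢
    rw [← hΦ C C' h, hC]
  have hall : ∀ w, μs.real (Φ ⁻¹' {w}) = μs.real (Φ ⁻¹' {0}) := by
    intro w
    obtain ⟨D, hD⟩ := hs w
    rw [measureReal_def, measureReal_def, dep_translate μs hμs F _ (hdep w) D]
    congr 2
    ext C
    simp [hadd, hD]
  have hsum := sum_measureReal_preimage_singleton (μ := μs) (f := Φ) Finset.univ
    (fun w _ => dep_meas F _ (hdep w))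
  simp only [hall, Finset.sum_const, Finset.card_univ, nsmul_eq_mul, Finset.coe_univ,
    Set.preimage_univ, probReal_univ] at hsum
  have : {C | Φ C = 0} = Φ ⁻¹' {0} := rfl
  rw [this]
  exact eq_inv_of_mul_eq_one_right hsum

end cyl

section func

variable {q s : ℕ}

/-- The column functional attached to `q a + 1`. -/
def phi (a : Fin s → ℕ) (C : Fin s → ℕ → ℕ → ZMod q) (i : ℕ) : ZMod q :=
  ∑ j, (C j 0 i + ∑ l ∈ Finset.range (a j + 1), digitVec q (a j) l * C j (l + 1) i)

/-- The event that the first `M` values of the functional vanish. -/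
def evt (a : Fin s → ℕ) (M : ℕ) : Set (Fin s → ℕ → ℕ → ZMod q) :=
  {C | ∀ i < M, phi a C i = 0}

theorem digitVec_zero (a l : ℕ) (h : a < q ^ l) : digitVec q a l = 0 := by
  simp [digitVec, Nat.div_eq_of_lt h]

theorem nat_digits_inj (hq : 2 ≤ q) (a b : ℕ) (h : ∀ i, a / q ^ i % q = b / q ^ i % q) :
    a = b := by
  induction a using Nat.strong_induction_on generalizing b with
  | _ a ih =>
    have h0 : a % q = b % q := by simpa using h 0
    by_cases ha : a = 0
    · subst ha
      have hb : b % q ^ (b+1) = 0 := by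
        have : ∀ n, b % q ^ n = 0 := by
          intro n
          induction n with
          | zero => simp [Nat.mod_one]
          | succ n ihn =>
            rw [pow_succ, Nat.mod_mul, ihn, ← h n]; simp
        exact this _
      rw [Nat.mod_eq_of_lt ((Nat.lt_succ_self b).trans (Nat.lt_pow_self (by omega)))] at hb
      exact hb.symm
    · have h1 := ih (a / q) (Nat.div_lt_self (by omega) (by omega)) (b / q) (fun i => by
        have := h (i + 1)
        rw [pow_succ', ← Nat.div_div_eq_div_mul, ← Nat.div_div_eq_div_mul] at this
        exact this)
      rw [← Nat.div_add_mod a q, ← Nat.div_add_mod b q, h0, h1]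

theorem exists_digit_ne (hq : 2 ≤ q) (a b : ℕ) (h : a ≠ b) :
    ∃ l, digitVec q a l ≠ digitVec q b l := by
  by_contra! hc
  refine h (nat_digits_inj hq a b fun i => ?_)
  have := hc i
  simp only [digitVec] at this
  rw [ZMod.natCast_eq_natCast_iff'] at this
  simpa using this

theorem phi_add (a : Fin s → ℕ) (C D : Fin s → ℕ → ℕ → ZMod q) (i : ℕ) :
    phi a (C + D) i = phi a C i + phi a D i := by
  simp only [phi, Pi.add_apply, mul_add, Finset.sum_add_distrib]
  ring

/-- Relevant entries. -/
def relF (a : Fin s → ℕ) (M : ℕ) : Finset (Fin s × ℕ × ℕ) :=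
  Finset.univ ×ˢ Finset.range (∑ j, a j + 2) ×ˢ Finset.range M

theorem phi_dep (a : Fin s → ℕ) (M : ℕ) (C D : Fin s → ℕ → ℕ → ZMod q) (i : ℕ) (hi : i < M)
    (h : ∀ p ∈ relF a M, C p.1 p.2.1 p.2.2 = D p.1 p.2.1 p.2.2) : phi a C i = phi a D i := by
  unfold phi
  refine Finset.sum_congr rfl fun j _ => ?_
  have hj : a j ≤ ∑ j, a j := Finset.single_le_sum (f := a) (fun _ _ => Nat.zero_le _)
    (Finset.mem_univ j)
  rw [h (j, 0, i) (by simp [relF, hi])]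
  congr 1
  refine Finset.sum_congr rfl fun l hl => ?_
  rw [Finset.mem_range] at hl
  rw [h (j, l + 1, i) (by simp [relF, hi]; omega)]

theorem phi_test (hq : 2 ≤ q) (a : Fin s → ℕ) (j0 j1 : Fin s) (l1 : ℕ) (x y : ℕ → ZMod q) (i : ℕ) :
    phi a (fun j l i => if l = 0 then (if j = j0 then x i else 0)
      else if j = j1 then (if l = l1 + 1 then y i else 0) else 0) i
      = x i + digitVec q (a j1) l1 * y i := by
  unfold phi
  rw [Finset.sum_add_distrib]
  congr 1
  · simp
  · rw [Finset.sum_eq_single j1]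
    · simp only [Nat.add_eq_zero_iff, one_ne_zero, and_false, if_false, if_true,
        Nat.add_right_cancel_iff, mul_ite, mul_zero]
      rw [Finset.sum_ite_eq']
      split_ifs with h
      · rfl
      · rw [Finset.mem_range, not_lt] at h
        have : a j1 < q ^ l1 := (Nat.lt_of_succ_le h).trans (Nat.lt_pow_self (by omega))
        rw [digitVec_zero _ _ this, zero_mul]
    · intro j _ hj
      simp [hj]
    · simp

theorem evt_dep (a : Fin s → ℕ) (M : ℕ) : DepOn (q := q) (relF a M) (evt a M) := by
  intro C C' h hC i hi
  rw [← phi_dep a M C C' i hi h]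
  exact hC i hi

theorem evt_measure [NeZero q] (hq : 2 ≤ q) (hs : 1 ≤ s) (μs : Measure (Fin s → ℕ → ℕ → ZMod q))
    (hμs : IsUniformMatrixTupleMeasure μs) (a : Fin s → ℕ) (M : ℕ) :
    μs.real (evt a M) = ((q : ℝ) ^ M)⁻¹ := by
  have := surj_measure μs hμs (relF a M) (fun C => fun i : Fin M => phi a C i)
    (fun C C' h => funext fun i => phi_dep a M C C' i i.2 h)
    (fun C D => funext fun i => phi_add a C D i)
    (fun w => ⟨_, funext fun i => (phi_test hq a ⟨0, hs⟩ ⟨0, hs⟩ 0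
      (fun i => if h : i < M then w ⟨i, h⟩ else 0) (fun _ => 0) i).trans (by simp)⟩)
  simp only [Fintype.card_pi, ZMod.card, Finset.prod_const, Finset.card_univ, Fintype.card_fin,
    Nat.cast_pow] at this
  rw [← this]
  congr 1
  ext C
  simp only [evt, Set.mem_ofPred_eq, funext_iff, Pi.zero_apply]
  exact ⟨fun h i => h i i.2, fun h i hi => h ⟨i, hi⟩⟩

theorem evt_pair [Fact q.Prime] (hs : 1 ≤ s) (μs : Measure (Fin s → ℕ → ℕ → ZMod q))
    (hμs : IsUniformMatrixTupleMeasure μs) (a a' : Fin s → ℕ) (haa : a ≠ a') (M M' : ℕ) :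
    μs.real (evt a M ∩ evt a' M') = μs.real (evt a M) * μs.real (evt a' M') := by
  classical
  have hq : 2 ≤ q := (Fact.out : q.Prime).two_le
  obtain ⟨j1, hj1⟩ : ∃ j, a j ≠ a' j := by
    by_contra! h; exact haa (funext h)
  obtain ⟨l1, hl1⟩ := exists_digit_ne hq _ _ hj1
  have hsub : digitVec q (a j1) l1 - digitVec q (a' j1) l1 ≠ 0 := sub_ne_zero.2 hl1
  have := surj_measure μs hμs (relF a M ∪ relF a' M')
    (fun C => ((fun i : Fin M => phi a C i), (fun i : Fin M' => phi a' C i)))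
    (fun C C' h => Prod.ext
      (funext fun i => phi_dep a M C C' i i.2 fun p hp => h p (Finset.mem_union_left _ hp))
      (funext fun i => phi_dep a' M' C C' i i.2 fun p hp => h p (Finset.mem_union_right _ hp)))
    (fun C D => Prod.ext (funext fun i => phi_add a C D i) (funext fun i => phi_add a' C D i))
    (by
      rintro ⟨w, w'⟩
      let u : ℕ → ZMod q := fun i => if h : i < M then w ⟨i, h⟩ else 0
      let u' : ℕ → ZMod q := fun i => if h : i < M' then w' ⟨i, h⟩ else 0
      let y : ℕ → ZMod q := fun i => (u i - u' i) /
        (digitVec q (a j1) l1 - digitVec q (a' j1) l1)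
      let x : ℕ → ZMod q := fun i => u i - digitVec q (a j1) l1 * y i
      have hy : ∀ i, (digitVec q (a j1) l1 - digitVec q (a' j1) l1) * y i = u i - u' i := by
        intro i
        simp only [y]
        field_simp
      refine ⟨fun j l i => if l = 0 then (if j = ⟨0, hs⟩ then x i else 0)
        else if j = j1 then (if l = l1 + 1 then y i else 0) else 0, Prod.ext
        (funext fun i => (phi_test hq a ⟨0, hs⟩ j1 l1 x y i).trans ?_)
        (funext fun i => (phi_test hq a' ⟨0, hs⟩ j1 l1 x y i).trans ?_)⟩
      · simp [x, u]
      · have := hy i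
        have h2 : u' i = w' i := by simp [u']
        change x i + digitVec q (a' j1) l1 * y i = w' i
        rw [← h2]
        simp only [x]
        linear_combination -this)
  rw [evt_measure hq hs μs hμs, evt_measure hq hs μs hμs, ← mul_inv]
  simp only [Fintype.card_prod, Fintype.card_pi, ZMod.card, Finset.prod_const, Finset.card_univ,
    Fintype.card_fin, Nat.cast_pow, Nat.cast_mul] at this
  rw [← this]
  congr 1
  ext C
  simp only [evt, Set.mem_ofPred_eq, Set.mem_inter_iff, Prod.mk_eq_zero, funext_iff,
    Pi.zero_apply]
  exact ⟨fun h => ⟨fun i => h.1 i i.2, fun i => h.2 i i.2⟩,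
    fun h => ⟨fun i hi => h.1 ⟨i, hi⟩, fun i hi => h.2 ⟨i, hi⟩⟩⟩

end func

section disc

variable {q s : ℕ}

theorem digsum_summable [NeZero q] (hq : 2 ≤ q) (d : ℕ → ZMod q) :
    Summable (fun i : ℕ => ((d i).val : ℝ) / (q : ℝ) ^ (i + 1)) := by
  have hq' : (2 : ℝ) ≤ q := by exact_mod_cast hq
  have hg : Summable (fun i : ℕ => ((q : ℝ)⁻¹) ^ i) :=
    summable_geometric_of_lt_one (by positivity) (inv_lt_one_of_one_lt₀ (by linarith))
  refine Summable.of_nonneg_of_le (fun i => by positivity) (fun i => ?_) hg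
  rw [inv_pow, div_le_iff₀ (by positivity), pow_succ, inv_mul_cancel_left₀ (by positivity)]
  exact_mod_cast (ZMod.val_lt (d i)).le

theorem digsum_partial [NeZero q] (hq : 2 ≤ q) (d : ℕ → ZMod q) (F : Finset ℕ) :
    ∑ i ∈ F, ((d i).val : ℝ) / (q : ℝ) ^ (i + 1) ≤ ∑' i, ((d i).val : ℝ) / (q : ℝ) ^ (i + 1) :=
  (digsum_summable hq d).sum_le_tsum F (fun i _ => by positivity)

theorem digsum_upper [NeZero q] (hq : 2 ≤ q) (d : ℕ → ZMod q) :
    ∑' i, ((d i).val : ℝ) / (q : ℝ) ^ (i + 1) ≤ ((d 0).val : ℝ) / q + 1 / q := by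
  have hq' : (2 : ℝ) ≤ q := by exact_mod_cast hq
  have hlt : (q : ℝ)⁻¹ < 1 := inv_lt_one_of_one_lt₀ (by linarith)
  rw [(digsum_summable hq d).tsum_eq_zero_add]
  simp only [zero_add, pow_one]
  refine add_le_add le_rfl ?_
  have hg : HasSum (fun i : ℕ => ((q : ℝ) - 1) / q ^ 2 * ((q : ℝ)⁻¹) ^ i)
      (((q : ℝ) - 1) / q ^ 2 * (1 - (q : ℝ)⁻¹)⁻¹) :=
    (hasSum_geometric_of_lt_one (by positivity) hlt).mul_left _
  have hv : ((q : ℝ) - 1) / q ^ 2 * (1 - (q : ℝ)⁻¹)⁻¹ = 1 / q := by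
    have h1 : (q : ℝ) - 1 ≠ 0 := by linarith
    have h2 : (q : ℝ) ≠ 0 := by linarith
    have h3 : 1 - (q : ℝ)⁻¹ = (q - 1) / q := by field_simp
    rw [h3]; field_simp
  rw [hv] at hg
  rw [← hg.tsum_eq]
  refine Summable.tsum_le_tsum (fun i => ?_)
    ((summable_nat_add_iff 1).2 (digsum_summable hq d)) hg.summable
  have hvl : ((d (i + 1)).val : ℝ) ≤ q - 1 := by
    have := ZMod.val_lt (d (i + 1))
    have h2 : (d (i + 1)).val + 1 ≤ q := this
    have : (((d (i + 1)).val + 1 : ℕ) : ℝ) ≤ q := by exact_mod_cast h2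
    push_cast at this
    linarith
  rw [inv_pow, div_mul_eq_mul_div, div_eq_mul_inv, div_eq_mul_inv, mul_assoc, ← mul_inv, ← pow_add]
  rw [show i + 1 + 1 = i + 2 by ring]
  gcongr

theorem val_zero_of_lt [NeZero q] (hq : 2 ≤ q) (x : ZMod q) (i R : ℕ) (hi : i < R)
    (h : (x.val : ℝ) / (q : ℝ) ^ (i + 1) < ((q : ℝ) ^ R)⁻¹) : x = 0 := by
  have hq' : (2 : ℝ) ≤ q := by exact_mod_cast hq
  by_contra hne
  have h1 : (1 : ℝ) ≤ x.val := by
    have : x.val ≠ 0 := fun h => hne ((ZMod.val_eq_zero x).1 h)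
    exact_mod_cast Nat.one_le_iff_ne_zero.2 this
  have h2 : ((q : ℝ) ^ R)⁻¹ ≤ ((q : ℝ) ^ (i + 1))⁻¹ := by
    gcongr
    · linarith
    · exact hi
  have h3 : ((q : ℝ) ^ (i + 1))⁻¹ ≤ (x.val : ℝ) / (q : ℝ) ^ (i + 1) := by
    rw [div_eq_mul_inv]
    exact le_mul_of_one_le_left (by positivity) h1
  linarith

theorem digits_low [NeZero q] (hq : 2 ≤ q) (d : ℕ → ZMod q) (R : ℕ)
    (h : ∑' i, ((d i).val : ℝ) / (q : ℝ) ^ (i + 1) < ((q : ℝ) ^ R)⁻¹) (i : ℕ) (hi : i < R) :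
    d i = 0 := by
  have := digsum_partial hq d {i}
  rw [Finset.sum_singleton] at this
  exact val_zero_of_lt hq _ i R hi (this.trans_lt h)

theorem digits_mid [Fact q.Prime] (hq : 2 ≤ q) (d : ℕ → ZMod q) (R : ℕ) (hR : 1 ≤ R)
    (h : ∑' i, ((d i).val : ℝ) / (q : ℝ) ^ (i + 1) < 1 / q + ((q : ℝ) ^ R)⁻¹)
    (h' : 1 / q + ((q : ℝ) ^ R)⁻¹ / 2 ≤ ∑' i, ((d i).val : ℝ) / (q : ℝ) ^ (i + 1)) :
    d 0 = 1 ∧ ∀ i, i + 1 < R → d (i + 1) = 0 := by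
  have hq' : (2 : ℝ) ≤ q := by exact_mod_cast hq
  have hpos : 0 < ((q : ℝ) ^ R)⁻¹ := by positivity
  have hR1 : ((q : ℝ) ^ R)⁻¹ ≤ 1 / q := by
    rw [← one_div]
    gcongr
    exact le_self_pow₀ (by linarith) (by omega)
  have h0 := digsum_partial hq d {0}
  simp only [Finset.sum_singleton, zero_add, pow_one] at h0
  have hlt : ((d 0).val : ℝ) < 2 := by
    have : ((d 0).val : ℝ) / q < 2 / q := by
      have : (2 : ℝ) / q = 1 / q + 1 / q := by ring
      linarith
    exact (div_lt_div_iff_of_pos_right (by linarith)).1 this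
  have hlt' : (d 0).val < 2 := by exact_mod_cast hlt
  have hne : (d 0).val ≠ 0 := by
    intro hz
    have := digsum_upper hq d
    rw [hz] at this
    simp only [Nat.cast_zero, zero_div, zero_add] at this
    linarith
  have hone : (d 0).val = 1 := by omega
  refine ⟨?_, fun i hi => ?_⟩
  · have : ((d 0).val : ZMod q) = d 0 := ZMod.natCast_zmod_val _
    rw [← this, hone]; simp
  · have := digsum_partial hq d {0, i + 1}
    rw [Finset.sum_pair (by omega), hone] at this
    simp only [zero_add, pow_one, Nat.cast_one] at this
    exact val_zero_of_lt hq _ (i + 1) R hi (by linarith)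

theorem evt_points (hq : 2 ≤ q) (a : Fin s → ℕ) (M : ℕ) (C : Fin s → ℕ → ℕ → ZMod q)
    (hC : C ∈ evt a M) (n : ℕ) (hn : n < q ^ M) :
    ∑ j, (matVec (C j) n 0 + ∑ l ∈ Finset.range (a j + 1),
      digitVec q (a j) l * matVec (C j) n (l + 1)) = 0 := by
  have : ∑ j, (matVec (C j) n 0 + ∑ l ∈ Finset.range (a j + 1),
      digitVec q (a j) l * matVec (C j) n (l + 1))
      = ∑ i ∈ Finset.range (n + 1), phi a C i * digitVec q n i := by
    simp only [phi, matVec, Finset.sum_mul, add_mul]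
    rw [Finset.sum_comm]
    refine Finset.sum_congr rfl fun j _ => ?_
    rw [Finset.sum_add_distrib]
    congr 1
    rw [Finset.sum_comm]
    refine Finset.sum_congr rfl fun l _ => ?_
    rw [Finset.mul_sum]
    exact Finset.sum_congr rfl fun i _ => by ring
  rw [this]
  refine Finset.sum_eq_zero fun i _ => ?_
  by_cases hi : i < M
  · rw [hC i hi, zero_mul]
  · rw [digitVec_zero _ _ (hn.trans_le (Nat.pow_le_pow_right (by omega) (not_lt.1 hi))), mul_zero]

theorem le_starDisc (y : ℕ → Fin s → ℝ) (x : Fin s → ℝ) (hx : ∀ j, x j ∈ Set.Icc (0 : ℝ) 1)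
    (N : ℕ) : |localDisc y x N| ≤ starDisc y N := by
  refine le_csSup ⟨N, ?_⟩ ⟨x, hx, rfl⟩
  rintro d ⟨x, hx, rfl⟩
  have hp0 : 0 ≤ ∏ j, x j := Finset.prod_nonneg fun j _ => (hx j).1
  have hp1 : ∏ j, x j ≤ 1 := Finset.prod_le_one (fun j _ => (hx j).1) fun j _ => (hx j).2
  have hc : Nat.card {n : ℕ | n < N ∧ ∀ j, y n j ∈ Set.Ico 0 (x j)} ≤ N := by
    have := Nat.card_mono (Set.finite_Iio N)
      (show {n : ℕ | n < N ∧ ∀ j, y n j ∈ Set.Ico 0 (x j)} ⊆ Set.Iio N from fun n hn => hn.1)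
    simpa using this
  have hc' : (Nat.card {n : ℕ | n < N ∧ ∀ j, y n j ∈ Set.Ico 0 (x j)} : ℝ) ≤ N := by
    exact_mod_cast hc
  have hN : (0 : ℝ) ≤ N := Nat.cast_nonneg N
  have h1 : (N : ℝ) * ∏ j, x j ≤ N := mul_le_of_le_one_right hN hp1
  have h2 : 0 ≤ (N : ℝ) * ∏ j, x j := mul_nonneg hN hp0
  have h3 : (0 : ℝ) ≤ (Nat.card {n : ℕ | n < N ∧ ∀ j, y n j ∈ Set.Ico 0 (x j)} : ℝ) :=
    Nat.cast_nonneg _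
  unfold localDisc
  rw [abs_le]
  constructor <;> linarith

theorem evt_disc [Fact q.Prime] (hs : 1 ≤ s) (a : Fin s → ℕ) (r : Fin s → ℕ)
    (har : ∀ j, a j < q ^ (r j + 1)) (M : ℕ) (C : Fin s → ℕ → ℕ → ZMod q) (hC : C ∈ evt a M) :
    (q : ℝ) ^ M * (∏ j, ((q : ℝ) ^ (r j + 2))⁻¹) / 4 ≤ starDisc (digitalSeq C) (q ^ M) := by
  classical
  have hq : 2 ≤ q := (Fact.out : q.Prime).two_le
  have hq' : (2 : ℝ) ≤ q := by exact_mod_cast hq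
  let j0 : Fin s := ⟨0, hs⟩
  let b : Fin s → ℝ := fun j => ((q : ℝ) ^ (r j + 2))⁻¹
  have hb0 : ∀ j, 0 < b j := fun j => by positivity
  have hb1 : ∀ j, b j ≤ 1 := fun j => inv_le_one_of_one_le₀ (one_le_pow₀ (by linarith))
  have hbq : b j0 ≤ 1 / q := by
    simp only [b]
    rw [← one_div]
    gcongr
    exact le_self_pow₀ (by linarith) (by omega)
  have hqh : (1 : ℝ) / q ≤ 1 / 2 := by gcongr
  have hqp : (0 : ℝ) < 1 / q := by positivity
  let xp := Function.update b j0 (1 / q + b j0)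
  let xm := Function.update b j0 (1 / q + b j0 / 2)
  have hxp : ∀ j, xp j ∈ Set.Icc (0 : ℝ) 1 := by
    intro j
    by_cases h : j = j0
    · subst h
      simp only [xp, Function.update_self]
      constructor <;> linarith [hb0 j0]
    · simp only [xp, Function.update_of_ne h]
      exact ⟨(hb0 j).le, hb1 j⟩
  have hle : ∀ j, xm j ≤ xp j := by
    intro j
    by_cases h : j = j0
    · subst h
      simp only [xp, xm, Function.update_self]
      linarith [hb0 j0]
    · simp only [xp, xm, Function.update_of_ne h, le_refl]
  have hxm : ∀ j, xm j ∈ Set.Icc (0 : ℝ) 1 := by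
    intro j
    refine ⟨?_, (hle j).trans (hxp j).2⟩
    by_cases h : j = j0
    · subst h
      simp only [xm, Function.update_self]
      linarith [hb0 j0]
    · simp only [xm, Function.update_of_ne h]
      exact (hb0 j).le
  have hset : {n : ℕ | n < q ^ M ∧ ∀ j, digitalSeq C n j ∈ Set.Ico 0 (xp j)}
      = {n : ℕ | n < q ^ M ∧ ∀ j, digitalSeq C n j ∈ Set.Ico 0 (xm j)} := by
    ext n
    simp only [Set.mem_ofPred_eq]
    refine ⟨fun ⟨hn, h⟩ => ⟨hn, fun j => ⟨(h j).1, ?_⟩⟩,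
      fun ⟨hn, h⟩ => ⟨hn, fun j => ⟨(h j).1, (h j).2.trans_le (hle j)⟩⟩⟩
    by_cases hj : j = j0
    swap
    · have := (h j).2
      simpa only [xp, xm, Function.update_of_ne hj] using this
    subst hj
    by_contra hcon
    rw [not_lt] at hcon
    have hup := (h j0).2
    simp only [xp, xm, Function.update_self] at hup hcon
    obtain ⟨hd0, hd1⟩ := digits_mid hq (fun i => matVec (C j0) n i) (r j0 + 2) (by omega) hup hcon
    have hsum := evt_points hq a M C hC n hn
    have hzero : ∀ j, ∑ l ∈ Finset.range (a j + 1),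
        digitVec q (a j) l * matVec (C j) n (l + 1) = 0 := by
      intro j
      refine Finset.sum_eq_zero fun l _ => ?_
      by_cases hl : l + 1 < r j + 2
      · by_cases hj : j = j0
        · subst hj
          rw [hd1 l hl, mul_zero]
        · have := (h j).2
          simp only [xp, Function.update_of_ne hj] at this
          rw [digits_low hq (fun i => matVec (C j) n i) (r j + 2) this (l + 1) hl, mul_zero]
      · rw [digitVec_zero _ _ ((har j).trans_le (Nat.pow_le_pow_right (by omega) (by omega))),
          zero_mul]
    simp only [hzero, add_zero] at hsum
    rw [Finset.sum_eq_single j0, hd0] at hsum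
    · exact one_ne_zero hsum
    · intro j _ hj
      have := (h j).2
      simp only [xp, Function.update_of_ne hj] at this
      exact digits_low hq (fun i => matVec (C j) n i) (r j + 2) this 0 (by omega)
    · simp
  have hp := le_starDisc (digitalSeq C) xp hxp (q ^ M)
  have hm := le_starDisc (digitalSeq C) xm hxm (q ^ M)
  have hdiff : localDisc (digitalSeq C) xm (q ^ M) - localDisc (digitalSeq C) xp (q ^ M)
      = (q : ℝ) ^ M * (∏ j, b j) / 2 := by
    unfold localDisc
    rw [hset]
    have e1 : ∏ j, xp j = (1 / q + b j0) * ∏ j ∈ Finset.univ \ {j0}, b j :=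
      Finset.prod_update_of_mem (Finset.mem_univ j0) _ _
    have e2 : ∏ j, xm j = (1 / q + b j0 / 2) * ∏ j ∈ Finset.univ \ {j0}, b j :=
      Finset.prod_update_of_mem (Finset.mem_univ j0) _ _
    have e3 : ∏ j, b j = b j0 * ∏ j ∈ Finset.univ \ {j0}, b j := by
      have := Finset.prod_update_of_mem (Finset.mem_univ j0) b (b j0)
      rwa [Function.update_eq_self] at this
    rw [e1, e2, e3]
    push_cast
    ring
  have h1 := abs_le.1 hp
  have h2 := abs_le.1 hm
  change (q : ℝ) ^ M * (∏ j, b j) / 4 ≤ _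
  linarith [h1.1, h2.2]

end disc

section final

variable {q s : ℕ}

/-- The gain at level `i`. -/
def gain (q s i : ℕ) : ℕ := Nat.log q (2 ^ (i * s) * (i + 1)) + 1

/-- The indices at level `i`. -/
def Lvl (q s i : ℕ) : Finset (Fin s → ℕ) :=
  Fintype.piFinset fun _ => Finset.Ico (q ^ (2 ^ i)) (q ^ (2 ^ (i + 1)))

/-- The number of vanishing columns. -/
def Mof (q : ℕ) {s : ℕ} (i : ℕ) (a : Fin s → ℕ) : ℕ :=
  ∑ j, (Nat.log q (a j) + 2) + gain q s i

theorem gain_lower (hq : 2 ≤ q) (i : ℕ) : 2 ^ (i * s) * (i + 1) ≤ q ^ gain q s i :=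
  (Nat.lt_pow_succ_log_self (by omega) _).le

theorem gain_upper (i : ℕ) : q ^ gain q s i ≤ q * (2 ^ (i * s) * (i + 1)) := by
  rw [gain, pow_succ, mul_comm]
  exact Nat.mul_le_mul_left _ (Nat.pow_log_le_self _ (by positivity))

theorem block_sum (hq : 2 ≤ q) (B n : ℕ) :
    (n : ℝ) / q ^ 2 ≤ ∑ a ∈ Finset.Ico (q ^ B) (q ^ (B + n)), ((q : ℝ) ^ (Nat.log q a + 2))⁻¹ := by
  have hq' : (2 : ℝ) ≤ q := by exact_mod_cast hq
  induction n with
  | zero => simp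
  | succ n ih =>
    rw [← Finset.sum_Ico_consecutive _ (Nat.pow_le_pow_right (by omega) (Nat.le_add_right B n))
      (Nat.pow_le_pow_right (by omega) (show B + n ≤ B + (n + 1) by omega))]
    have h1 : ∑ a ∈ Finset.Ico (q ^ (B + n)) (q ^ (B + (n + 1))), ((q : ℝ) ^ (Nat.log q a + 2))⁻¹
        = ∑ a ∈ Finset.Ico (q ^ (B + n)) (q ^ (B + (n + 1))), ((q : ℝ) ^ (B + n + 2))⁻¹ := by
      refine Finset.sum_congr rfl fun a ha => ?_
      rw [Finset.mem_Ico] at ha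
      rw [Nat.log_eq_of_pow_le_of_lt_pow ha.1 (by rw [add_assoc]; exact ha.2)]
    rw [h1, Finset.sum_const, Nat.card_Ico, nsmul_eq_mul]
    have h2 : q ^ (B + n) ≤ q ^ (B + (n + 1)) - q ^ (B + n) := by
      have : q ^ (B + (n + 1)) = q ^ (B + n) * q := by rw [← add_assoc, pow_succ]
      rw [this]
      have := Nat.mul_le_mul_left (q ^ (B + n)) hq
      omega
    have h3 : ((q : ℝ) ^ (B + n)) ≤ ((q ^ (B + (n + 1)) - q ^ (B + n) : ℕ) : ℝ) := by
      exact_mod_cast h2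
    have h4 : (1 : ℝ) / q ^ 2 = (q : ℝ) ^ (B + n) * ((q : ℝ) ^ (B + n + 2))⁻¹ := by
      rw [pow_add _ (B + n) 2]; field_simp
    have h5 : (q : ℝ) ^ (B + n) * ((q : ℝ) ^ (B + n + 2))⁻¹
        ≤ ((q ^ (B + (n + 1)) - q ^ (B + n) : ℕ) : ℝ) * ((q : ℝ) ^ (B + n + 2))⁻¹ := by
      gcongr
    have h6 : ((n + 1 : ℕ) : ℝ) / q ^ 2 = n / q ^ 2 + 1 / q ^ 2 := by push_cast; ring
    linarith

theorem Mof_pow (hq : 2 ≤ q) (i : ℕ) (a : Fin s → ℕ) :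
    (q : ℝ) ^ Mof q i a * (∏ j, ((q : ℝ) ^ (Nat.log q (a j) + 2))⁻¹) = (q : ℝ) ^ gain q s i := by
  have hq' : (2 : ℝ) ≤ q := by exact_mod_cast hq
  rw [Mof, pow_add, Finset.prod_inv_distrib, Finset.prod_pow_eq_pow_sum]
  field_simp

theorem level_sum (hq : 2 ≤ q) (i : ℕ) :
    ((q : ℝ) ^ (2 * s + 1))⁻¹ * (1 / ((i : ℝ) + 1)) ≤ ∑ a ∈ Lvl q s i, ((q : ℝ) ^ Mof q i a)⁻¹ := by
  have hq' : (2 : ℝ) ≤ q := by exact_mod_cast hq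
  have h1 : ∀ a : Fin s → ℕ, ((q : ℝ) ^ Mof q i a)⁻¹
      = ((q : ℝ) ^ gain q s i)⁻¹ * ∏ j, ((q : ℝ) ^ (Nat.log q (a j) + 2))⁻¹ := by
    intro a
    rw [Mof, pow_add, Finset.prod_inv_distrib, Finset.prod_pow_eq_pow_sum, mul_inv, mul_comm]
  simp_rw [h1]
  rw [← Finset.mul_sum, Lvl, ← Finset.prod_univ_sum
    (fun _ : Fin s => Finset.Ico (q ^ (2 ^ i)) (q ^ (2 ^ (i + 1))))
    (fun _ a => ((q : ℝ) ^ (Nat.log q a + 2))⁻¹)]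
  have hb := block_sum hq (2 ^ i) (2 ^ i)
  rw [show 2 ^ i + 2 ^ i = 2 ^ (i + 1) by ring] at hb
  push_cast at hb
  rw [Finset.prod_const, Finset.card_univ, Fintype.card_fin]
  have hg : (q : ℝ) ^ gain q s i ≤ q * (2 ^ (i * s) * (i + 1)) := by
    exact_mod_cast gain_upper (q := q) (s := s) i
  calc ((q : ℝ) ^ (2 * s + 1))⁻¹ * (1 / ((i : ℝ) + 1))
      = (q * (2 ^ (i * s) * ((i : ℝ) + 1)))⁻¹ * ((2 ^ i) / (q : ℝ) ^ 2) ^ s := by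
        rw [div_pow, ← pow_mul, ← pow_mul, pow_succ]
        field_simp
    _ ≤ _ := by gcongr

theorem ae_hits [Fact q.Prime] (hs : 1 ≤ s) (μs : Measure (Fin s → ℕ → ℕ → ZMod q))
    (hμs : IsUniformMatrixTupleMeasure μs) :
    ∀ᵐ C ∂μs, ∀ i0 : ℕ, ∃ i ≥ i0, ∃ a ∈ Lvl q s i, C ∈ evt a (Mof q i a) := by
  classical
  have hq : 2 ≤ q := (Fact.out : q.Prime).two_le
  have hq' : (2 : ℝ) ≤ q := by exact_mod_cast hq
  have hprob := hμs.1
  rw [ae_all_iff]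
  intro i0
  rw [ae_iff]
  set Z : Set (Fin s → ℕ → ℕ → ZMod q) :=
    {C | ¬∃ i ≥ i0, ∃ a ∈ Lvl q s i, C ∈ evt a (Mof q i a)} with hZ
  by_contra hne
  have hpos : 0 < μs.real Z := by
    rw [measureReal_def]
    exact ENNReal.toReal_pos hne (measure_ne_top _ _)
  set κ : ℝ := ((q : ℝ) ^ (2 * s + 1))⁻¹ with hκ
  have hκ0 : 0 < κ := by positivity
  -- choose a large cut-off
  obtain ⟨n, hn⟩ := ((tendsto_atTop.1 Real.tendsto_sum_range_one_div_nat_succ_atTop)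
    (∑ i ∈ Finset.range i0, 1 / ((i : ℝ) + 1) + (2 / μs.real Z) / κ)).and
      (eventually_ge_atTop i0) |>.exists
  obtain ⟨hn, hin⟩ := hn
  let K : Finset (Σ _ : ℕ, (Fin s → ℕ)) := (Finset.Ico i0 n).sigma (fun i => Lvl q s i)
  let E : (Σ _ : ℕ, (Fin s → ℕ)) → Set (Fin s → ℕ → ℕ → ZMod q) :=
    fun x => evt x.2 (Mof q x.1 x.2)
  let B : Set (Fin s → ℕ → ℕ → ZMod q) := ⋂ x ∈ K, (E x)ᶜ
  have hEm : ∀ x ∈ K, MeasurableSet (E x) := fun x _ => dep_meas _ _ (evt_dep _ _)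
  have hBm : MeasurableSet B := Finset.measurableSet_biInter _ fun x hx => (hEm x hx).compl
  have hlog : ∀ i, ∀ a ∈ Lvl q s i, Nat.log 2 (Nat.log q (a ⟨0, hs⟩)) = i := by
    intro i a ha
    have := Fintype.mem_piFinset.1 ha ⟨0, hs⟩
    rw [Finset.mem_Ico] at this
    have h0 : a ⟨0, hs⟩ ≠ 0 := by
      have : 0 < q ^ 2 ^ i := by positivity
      omega
    refine Nat.log_eq_of_pow_le_of_lt_pow ?_ ?_
    · exact Nat.le_log_of_pow_le (by omega) this.1
    · exact Nat.log_lt_of_lt_pow h0 this.2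
  have hbound := sm_bound μs E K hEm (by
    rintro ⟨i, a⟩ hx ⟨i', a'⟩ hx' hne
    refine evt_pair hs μs hμs a a' ?_ _ _
    rintro rfl
    rw [Finset.mem_sigma] at hx hx'
    have := (hlog i a hx.2).symm.trans (hlog i' a hx'.2)
    subst this
    exact hne rfl) B hBm (fun ω hω x hx => by
      have := Set.mem_iInter₂.1 hω x hx
      exact this)
  have hZB : Z ⊆ B := by
    intro C hC
    refine Set.mem_iInter₂.2 fun x hx hCx => ?_
    rw [Finset.mem_sigma, Finset.mem_Ico] at hx
    exact hC ⟨x.1, hx.1.1, x.2, hx.2, hCx⟩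
  have hmono : μs.real Z ≤ μs.real B := measureReal_mono hZB
  set S := ∑ x ∈ K, μs.real (E x) with hS
  have hSlow : 2 / μs.real Z ≤ S := by
    have e1 : S = ∑ i ∈ Finset.Ico i0 n, ∑ a ∈ Lvl q s i, ((q : ℝ) ^ Mof q i a)⁻¹ := by
      rw [hS, Finset.sum_sigma]
      refine Finset.sum_congr rfl fun i _ => Finset.sum_congr rfl fun a _ => ?_
      exact evt_measure hq hs μs hμs a _
    have e2 : κ * ∑ i ∈ Finset.Ico i0 n, 1 / ((i : ℝ) + 1) ≤ S := by
      rw [e1, Finset.mul_sum]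
      exact Finset.sum_le_sum fun i _ => level_sum hq i
    have e3 := Finset.sum_range_add_sum_Ico (fun i : ℕ => 1 / ((i : ℝ) + 1)) hin
    have e4 : (2 / μs.real Z) / κ ≤ ∑ i ∈ Finset.Ico i0 n, 1 / ((i : ℝ) + 1) := by linarith
    rw [div_le_iff₀ hκ0] at e4
    linarith
  have hSpos : 0 < S := lt_of_lt_of_le (by positivity) hSlow
  have h1 : μs.real B * S ≤ 1 := by
    have : μs.real B * S * S ≤ 1 * S := by rw [one_mul]; linarith [hbound, sq S]
    exact le_of_mul_le_mul_right this hSpos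
  have h2 : μs.real Z * S ≤ 1 := (mul_le_mul_of_nonneg_right hmono hSpos.le).trans h1
  rw [div_le_iff₀ hpos] at hSlow
  linarith

theorem Mof_upper (hq : 2 ≤ q) (hs : 1 ≤ s) (i : ℕ) (a : Fin s → ℕ) (ha : a ∈ Lvl q s i) :
    Mof q i a ≤ 5 * s * 2 ^ i := by
  have h1 : ∀ j, Nat.log q (a j) + 2 ≤ 3 * 2 ^ i := by
    intro j
    have := Fintype.mem_piFinset.1 ha j
    rw [Finset.mem_Ico] at this
    have h0 : a j ≠ 0 := by
      have : 0 < q ^ 2 ^ i := by positivity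
      omega
    have h2 : Nat.log q (a j) < 2 ^ (i + 1) := Nat.log_lt_of_lt_pow h0 this.2
    have h3 : 0 < 2 ^ i := by positivity
    rw [pow_succ] at h2
    omega
  have h2 : ∑ j, (Nat.log q (a j) + 2) ≤ s * (3 * 2 ^ i) := by
    have := Finset.sum_le_card_nsmul Finset.univ (fun j => Nat.log q (a j) + 2) _ (fun j _ => h1 j)
    simpa using this
  have hi : i + 1 ≤ 2 ^ i := Nat.lt_two_pow_self
  have h3 : Nat.log q (2 ^ (i * s) * (i + 1)) ≤ i * s + i := by
    have : 2 ^ (i * s) * (i + 1) ≤ 2 ^ (i * s + i) := by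
      rw [pow_add]; exact Nat.mul_le_mul_left _ hi
    calc _ ≤ Nat.log 2 (2 ^ (i * s) * (i + 1)) := Nat.log_anti_left (by omega) hq
      _ ≤ Nat.log 2 (2 ^ (i * s + i)) := Nat.log_mono_right this
      _ = _ := Nat.log_pow (by omega) _
  have h4 : gain q s i ≤ 2 * s * 2 ^ i := by
    unfold gain
    calc _ ≤ i * s + i + 1 := by omega
      _ ≤ 2 * s * (i + 1) := by nlinarith
      _ ≤ _ := Nat.mul_le_mul_left _ hi
  unfold Mof
  calc _ ≤ s * (3 * 2 ^ i) + 2 * s * 2 ^ i := by omega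
    _ = _ := by ring

theorem final_ineq (hq : 2 ≤ q) (hs : 1 ≤ s) (i M : ℕ) (hM0 : 1 ≤ M) (hM : M ≤ 5 * s * 2 ^ i) :
    (4 * ((5 * s * Real.log q) ^ s * (5 * s * Real.log q + 1)))⁻¹
      * Real.log ((q ^ M : ℕ) : ℝ) ^ s * Real.log (Real.log ((q ^ M : ℕ) : ℝ))
      ≤ (q : ℝ) ^ gain q s i / 4 := by
  have hq' : (2 : ℝ) ≤ q := by exact_mod_cast hq
  have hs' : (1 : ℝ) ≤ s := by exact_mod_cast hs
  have hlq : 0 < Real.log q := Real.log_pos (by linarith)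
  set A : ℝ := 5 * s * Real.log q with hA
  have hA0 : 0 < A := by positivity
  push_cast
  rw [Real.log_pow]
  have hM' : (M : ℝ) ≤ 5 * s * 2 ^ i := by exact_mod_cast hM
  have hM1 : (1 : ℝ) ≤ M := by exact_mod_cast hM0
  have hL0 : 0 < M * Real.log q := by positivity
  have hL : M * Real.log q ≤ A * 2 ^ i := by
    rw [hA]
    calc _ ≤ (5 * s * 2 ^ i) * Real.log q := by gcongr
      _ = _ := by ring
  have hLL : Real.log (M * Real.log q) ≤ (A + 1) * (i + 1) := by
    calc _ ≤ Real.log (A * 2 ^ i) := Real.log_le_log hL0 hL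
      _ = Real.log A + i * Real.log 2 := by
        rw [Real.log_mul hA0.ne' (by positivity), Real.log_pow]
      _ ≤ A + i * 1 := by
        gcongr
        · linarith [Real.log_le_sub_one_of_pos hA0]
        · linarith [Real.log_two_lt_d9]
      _ ≤ _ := by nlinarith [Nat.cast_nonneg (α := ℝ) i]
  have hg : (2 : ℝ) ^ (i * s) * (i + 1) ≤ (q : ℝ) ^ gain q s i := by
    exact_mod_cast gain_lower (q := q) (s := s) hq i
  calc (4 * (A ^ s * (A + 1)))⁻¹ * (M * Real.log q) ^ s * Real.log (M * Real.log q)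
      ≤ (4 * (A ^ s * (A + 1)))⁻¹ * (M * Real.log q) ^ s * ((A + 1) * (i + 1)) := by gcongr
    _ ≤ (4 * (A ^ s * (A + 1)))⁻¹ * (A * 2 ^ i) ^ s * ((A + 1) * (i + 1)) := by gcongr
    _ = (2 : ℝ) ^ (i * s) * (i + 1) / 4 := by
      rw [mul_pow A, ← pow_mul]; field_simp
    _ ≤ _ := by gcongr

end final

/-- **Theorem 2 (Larcher–Pillichshammer).**  For `μ_s`-almost all `s`-tuples of generating
matrices, the star discrepancy of the associated digital sequence over `ZMod q` satisfies
`D*_N ≥ c(q,s) (log N)^s log log N` for infinitely many `N`. -/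
theorem metrical_lower_bound_star_discrepancy_digital_sequences
    (q s : ℕ) (hq : q.Prime) (hs : 1 ≤ s)
    (μs : Measure (Fin s → ℕ → ℕ → ZMod q)) (hμs : IsUniformMatrixTupleMeasure μs) :
    ∃ c : ℝ, 0 < c ∧ ∀ᵐ C ∂μs,
      {N : ℕ | c * Real.log N ^ s * Real.log (Real.log N)
          ≤ starDisc (digitalSeq C) N}.Infinite := by
  have : Fact q.Prime := ⟨hq⟩
  have hq2 : 2 ≤ q := hq.two_le
  have hq' : (2 : ℝ) ≤ q := by exact_mod_cast hq2
  have hlq : 0 < Real.log q := Real.log_pos (by linarith)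
  have hs' : (1 : ℝ) ≤ s := by exact_mod_cast hs
  refine ⟨(4 * ((5 * s * Real.log q) ^ s * (5 * s * Real.log q + 1)))⁻¹, by positivity, ?_⟩
  filter_upwards [ae_hits hs μs hμs] with C hC
  rw [Set.infinite_iff_exists_gt]
  intro n
  obtain ⟨i, hi, a, ha, hCa⟩ := hC n
  have hMi : i < Mof q i a := by
    have h1 : 2 ^ i ≤ Nat.log q (a ⟨0, hs⟩) := by
      have := Fintype.mem_piFinset.1 ha ⟨0, hs⟩
      rw [Finset.mem_Ico] at this
      exact Nat.le_log_of_pow_le (by omega) this.1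
    have h2 : Nat.log q (a ⟨0, hs⟩) + 2 ≤ ∑ j, (Nat.log q (a j) + 2) :=
      Finset.single_le_sum (f := fun j => Nat.log q (a j) + 2) (fun _ _ => Nat.zero_le _)
        (Finset.mem_univ _)
    have h3 : i < 2 ^ i := Nat.lt_two_pow_self
    unfold Mof
    omega
  refine ⟨q ^ Mof q i a, ?_, ?_⟩
  · have h1 := final_ineq (q := q) (s := s) hq2 hs i (Mof q i a) (by omega)
      (Mof_upper hq2 hs i a ha)
    have h2 := evt_disc hs a (fun j => Nat.log q (a j))
      (fun j => Nat.lt_pow_succ_log_self (by omega) _) (Mof q i a) C hCa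
    rw [Mof_pow hq2] at h2
    exact h1.trans h2
  · exact (hi.trans_lt hMi).trans (Nat.lt_pow_self (by omega))
end
end

section
/- Let q be a prime number, i ∈ ℕ₀ and k ∈ ℕ₀ with digit vector k⃗. Then ∫_{(ZMod q)^{ℕ×ℕ}} wal_i(Cᵀ k⃗) dμ(C) = 1 if i = 0 or k = 0, and = 0 otherwise. -/
open MeasureTheory Filter
open scoped ENNReal

noncomputable section

theorem aux_digitVec_zero (q : ℕ) (n : ℕ) : digitVec q 0 n = 0 := by
  simp [digitVec]

theorem aux_digitVec_log (q : ℕ) (hq : q.Prime) (k : ℕ) (hk : k ≠ 0) :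
    digitVec q k (Nat.log q k) ≠ 0 := by
  have h1 : q ^ Nat.log q k ≤ k := Nat.pow_log_le_self q hk
  have h2 : k < q ^ (Nat.log q k + 1) := Nat.lt_pow_succ_log_self hq.one_lt k
  have hpos : 0 < q ^ Nat.log q k := pow_pos hq.pos _
  have h3 : k / q ^ Nat.log q k < q := by
    rw [Nat.div_lt_iff_lt_mul hpos]
    rwa [pow_succ, mul_comm] at h2
  have h4 : 0 < k / q ^ Nat.log q k := Nat.div_pos h1 hpos
  unfold digitVec
  rw [Nat.mod_eq_of_lt h3, Ne, ZMod.natCast_eq_zero_iff]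
  intro hd
  exact absurd (Nat.le_of_dvd h4 hd) (not_le.mpr h3)

theorem aux_omega (q : ℕ) [NeZero q] (x : ZMod q) :
    omega q ^ x.val = ZMod.stdAddChar x := by
  rw [ZMod.stdAddChar_apply, ZMod.toCircle_apply, omega, ← Complex.exp_nat_mul]
  congr 1
  ring

/-- The linear functional on finitely many entries. -/
def auxL (q i k : ℕ) :
    (↥(Finset.range (i + 1) ×ˢ Finset.range (k + 1)) → ZMod q) →+ ZMod q where
  toFun g := ∑ p, digitVec q i p.1.1 * (g p * digitVec q k p.1.2)
  map_zero' := by simp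
  map_add' g h := by
    simp only [Pi.add_apply, add_mul, mul_add, Finset.sum_add_distrib]

/-- Restriction of a matrix to finitely many entries. -/
def auxR (q i k : ℕ) (C : ℕ → ℕ → ZMod q) :
    ↥(Finset.range (i + 1) ×ˢ Finset.range (k + 1)) → ZMod q :=
  fun p => C p.1.2 p.1.1

theorem aux_wal (q i k : ℕ) [NeZero q] (C : ℕ → ℕ → ZMod q) :
    wal q i (matVec (transp C) k) = ZMod.stdAddChar (auxL q i k (auxR q i k C)) := by
  rw [wal, aux_omega]
  congr 1
  simp only [matVec, transp, auxL, auxR, AddMonoidHom.coe_mk, ZeroHom.coe_mk, Finset.mul_sum]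
  rw [← Finset.sum_product', ← Finset.sum_coe_sort]

theorem aux_meas (q i k : ℕ) : Measurable (auxR q i k) := by
  refine measurable_pi_lambda _ fun p => ?_
  exact (measurable_pi_apply p.1.1).comp (measurable_pi_apply p.1.2)

theorem aux_singleton (q i k : ℕ) (μ : Measure (ℕ → ℕ → ZMod q))
    (hμ : IsUniformMatrixMeasure μ)
    (g : ↥(Finset.range (i + 1) ×ˢ Finset.range (k + 1)) → ZMod q) :
    μ (auxR q i k ⁻¹' {g}) =
      ((q : ℝ≥0∞)⁻¹) ^ (Finset.range (k + 1) ×ˢ Finset.range (i + 1)).card := by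
  classical
  rw [← hμ.2 _ (fun p => if h : (p.2, p.1) ∈ Finset.range (i + 1) ×ˢ Finset.range (k + 1)
    then g ⟨_, h⟩ else 0)]
  congr 1
  ext C
  simp only [Set.mem_preimage, Set.mem_singleton_iff, Set.mem_setOf_eq]
  constructor
  · rintro rfl p hp
    have h : (p.2, p.1) ∈ Finset.range (i + 1) ×ˢ Finset.range (k + 1) := by
      rw [Finset.mem_product] at hp ⊢
      exact ⟨hp.2, hp.1⟩
    rw [dif_pos h]
    rfl
  · intro H
    funext p
    have hp := p.2
    have := H (p.1.2, p.1.1) (by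
      rw [Finset.mem_product] at hp ⊢
      exact ⟨hp.2, hp.1⟩)
    rw [dif_pos hp] at this
    exact this

theorem aux_L_single (q : ℕ) (hq : q.Prime) (i k : ℕ) (hi : i ≠ 0) (hk : k ≠ 0) :
    ∃ g, auxL q i k g ≠ 0 := by
  classical
  haveI : Fact q.Prime := ⟨hq⟩
  have hm : (Nat.log q i, Nat.log q k) ∈ Finset.range (i + 1) ×ˢ Finset.range (k + 1) := by
    rw [Finset.mem_product, Finset.mem_range, Finset.mem_range]
    exact ⟨Nat.lt_succ_of_le (Nat.log_le_self _ _), Nat.lt_succ_of_le (Nat.log_le_self _ _)⟩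
  refine ⟨Pi.single ⟨_, hm⟩ 1, ?_⟩
  simp only [auxL, AddMonoidHom.coe_mk, ZeroHom.coe_mk]
  rw [Finset.sum_eq_single ⟨_, hm⟩]
  · rw [Pi.single_eq_same, one_mul]
    exact mul_ne_zero (aux_digitVec_log q hq i hi) (aux_digitVec_log q hq k hk)
  · intro b _ hb
    rw [Pi.single_eq_of_ne hb]
    simp
  · intro h
    exact absurd (Finset.mem_univ _) h

/-- **Lemma 1.3.**  `∫ wal_i(Cᵀk⃗) dμ(C) = 1` if `i = 0` or `k = 0`, and `= 0` otherwise. -/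
theorem integral_wal_transpose_digitVec (q : ℕ) (hq : q.Prime) (i k : ℕ)
    (μ : Measure (ℕ → ℕ → ZMod q)) (hμ : IsUniformMatrixMeasure μ) :
    ∫ C, wal q i (matVec (transp C) k) ∂μ = if i = 0 ∨ k = 0 then 1 else 0 := by
  haveI : Fact q.Prime := ⟨hq⟩
  haveI : NeZero q := ⟨hq.ne_zero⟩
  haveI := hμ.1
  split_ifs with h
  · have : ∀ C : ℕ → ℕ → ZMod q, wal q i (matVec (transp C) k) = 1 := by
      intro C
      rcases h with rfl | rfl <;> simp [wal, matVec, aux_digitVec_zero]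
    simp [this]
  · push Not at h
    simp only [aux_wal]
    haveI : IsProbabilityMeasure (μ.map (auxR q i k)) :=
      Measure.isProbabilityMeasure_map (aux_meas q i k).aemeasurable
    rw [← integral_map (f := fun g => ZMod.stdAddChar (auxL q i k g))
      (aux_meas q i k).aemeasurable (measurable_of_finite _).aestronglyMeasurable,
      integral_fintype .of_finite]
    simp only [Measure.real, Measure.map_apply (aux_meas q i k) (measurableSet_singleton _),
      aux_singleton q i k μ hμ]
    rw [← Finset.smul_sum]
    have : ∑ g, (ZMod.stdAddChar.compAddMonoidHom (auxL q i k)) g = (0 : ℂ) := by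
      rw [AddChar.sum_eq_zero_iff_ne_zero, AddChar.ne_zero_iff]
      obtain ⟨g, hg⟩ := aux_L_single q hq i k h.1 h.2
      refine ⟨g, fun h1 => hg ?_⟩
      apply ZMod.injective_stdAddChar
      rw [AddChar.map_zero_eq_one]
      exact h1
    simp only [AddChar.compAddMonoidHom_apply] at this
    rw [this, smul_zero]
end
end

section
/- Let q be a prime number, s ∈ ℕ, and P̄ ⊆ ℕ^s. Suppose that for each (k₁,…,k_s) ∈ P̄, with r_j = len(k_j) for j = 1,…,s, elements β₁(k₁),…,β_s(k_s) ∈ ℕ₀ are given such that for each j either β_j(k_j) = 0 or len(β_j(k_j)) > len(k_j), and not all of β₁(k₁),…,β_s(k_s) are zero. Let M̃ be the set of tuples (C₁,…,C_s) ∈ ((ZMod q)^{ℕ×ℕ})^s such that both ν(C₁ᵀk⃗₁ + ⋯ + C_sᵀk⃗_s) ≤ −(r₁+⋯+r_s) and ν(C₁ᵀ(k⃗₁+β⃗₁(k₁)) + ⋯ + C_sᵀ(k⃗_s+β⃗_s(k_s))) ≤ −⌊(r₁+⋯+r_s)/2⌋ hold for infinitely many (k₁,…,k_s) ∈ P̄.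 Then μ_s(M̃) = 0. -/
open MeasureTheory Filter
open scoped ENNReal

noncomputable section

lemma card_cover_bound {q s : ℕ} (hq : q.Prime)
    (μs : Measure (Fin s → ℕ → ℕ → ZMod q)) (hμs : IsUniformMatrixTupleMeasure μs)
    (F piv : Finset (Fin s × ℕ × ℕ)) (hp : piv ⊆ F) (E : Set (Fin s → ℕ → ℕ → ZMod q))
    (hE : ∀ C ∈ E, ∀ C' ∈ E, (∀ p ∈ F \ piv, C p.1 p.2.1 p.2.2 = C' p.1 p.2.1 p.2.2) →
      ∀ p ∈ F, C p.1 p.2.1 p.2.2 = C' p.1 p.2.1 p.2.2) :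
    μs E ≤ ((q : ℝ≥0∞)⁻¹) ^ piv.card := by
  classical
  haveI : NeZero q := ⟨hq.ne_zero⟩
  have hq0 : (q : ℝ≥0∞) ≠ 0 := by exact_mod_cast hq.ne_zero
  have hqt : (q : ℝ≥0∞) ≠ ⊤ := ENNReal.natCast_ne_top q
  let S : ((F \ piv : Finset _) → ZMod q) → Set (Fin s → ℕ → ℕ → ZMod q) := fun h =>
    {C | C ∈ E ∧ ∀ p : (F \ piv : Finset _), C p.1.1 p.1.2.1 p.1.2.2 = h p}
  have hS : ∀ h, μs (S h) ≤ ((q : ℝ≥0∞)⁻¹) ^ F.card := by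
    intro h
    by_cases hne : (S h).Nonempty
    · obtain ⟨C0, hC0, hC0'⟩ := hne
      rw [← hμs.2 F (fun p => C0 p.1 p.2.1 p.2.2)]
      apply measure_mono
      rintro C ⟨hC, hC'⟩
      apply hE C hC C0 hC0
      intro p hpp
      exact (hC' ⟨p, hpp⟩).trans (hC0' ⟨p, hpp⟩).symm
    · rw [Set.not_nonempty_iff_eq_empty.1 hne]
      simp
  have hcov : E ⊆ ⋃ h, S h := by
    intro C hC
    exact Set.mem_iUnion.2 ⟨fun p => C p.1.1 p.1.2.1 p.1.2.2, hC, fun p => rfl⟩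
  calc μs E ≤ μs (⋃ h, S h) := measure_mono hcov
    _ ≤ ∑ h, μs (S h) := measure_iUnion_fintype_le _ _
    _ ≤ ∑ _h : ((F \ piv : Finset _) → ZMod q), ((q : ℝ≥0∞)⁻¹) ^ F.card :=
        Finset.sum_le_sum fun h _ => hS h
    _ = (q : ℝ≥0∞) ^ (F \ piv).card * ((q : ℝ≥0∞)⁻¹) ^ F.card := by
        rw [Finset.sum_const, Finset.card_univ, Fintype.card_fun, ZMod.card, Fintype.card_coe,
          nsmul_eq_mul, Nat.cast_pow]
    _ = ((q : ℝ≥0∞)⁻¹) ^ piv.card := by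
        rw [← Finset.card_sdiff_add_card_eq_card hp, pow_add, ← mul_assoc, ← mul_pow,
          ENNReal.mul_inv_cancel hq0 hqt, one_pow, one_mul]

lemma digit_lead {q : ℕ} (hq : q.Prime) {k : ℕ} (hk : k ≠ 0) :
    digitVec q k (len q k) ≠ 0 := by
  unfold digitVec len
  have h1 : 0 < k / q ^ Nat.log q k :=
    Nat.div_pos (Nat.pow_log_le_self q hk) (pow_pos hq.pos _)
  have h2 : k / q ^ Nat.log q k < q := by
    rw [Nat.div_lt_iff_lt_mul (pow_pos hq.pos _), ← pow_succ']
    exact Nat.lt_pow_succ_log_self hq.one_lt k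
  rw [Nat.mod_eq_of_lt h2, Ne, ZMod.natCast_eq_zero_iff]
  exact fun h => absurd (Nat.le_of_dvd h1 h) (by omega)

lemma digit_high {q : ℕ} (hq : q.Prime) {k j : ℕ} (hj : len q k < j) :
    digitVec q k j = 0 := by
  unfold digitVec
  unfold len at hj
  rw [Nat.div_eq_of_lt (Nat.lt_pow_of_log_lt hq.one_lt hj)]
  simp

lemma len_le_self' (q k : ℕ) : len q k ≤ k := Nat.log_le_self q k

lemma sum_single_entry {q s : ℕ} (k : Fin s → ℕ) (D : Fin s → ℕ → ZMod q) (u0 : Fin s) (j0 : ℕ)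
    (hj0 : j0 ≤ k u0)
    (h : ∀ u, ∀ j ≤ k u, (u, j) ≠ (u0, j0) → D u j * digitVec q (k u) j = 0) :
    ∑ u, ∑ j ∈ Finset.range (k u + 1), D u j * digitVec q (k u) j
      = D u0 j0 * digitVec q (k u0) j0 := by
  rw [Finset.sum_eq_single u0, Finset.sum_eq_single j0]
  · intro j hj hne
    exact h u0 j (by simpa [Nat.lt_succ_iff] using hj) (by simp [hne])
  · intro hj
    exact absurd (Finset.mem_range.2 (by omega)) hj
  · intro u _ hne
    apply Finset.sum_eq_zero
    intro j hj
    exact h u j (by simpa [Nat.lt_succ_iff] using hj) (by simp [hne])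
  · simp

lemma event_bound {q s : ℕ} (hq : q.Prime)
    (μs : Measure (Fin s → ℕ → ℕ → ZMod q)) (hμs : IsUniformMatrixTupleMeasure μs)
    (k b : Fin s → ℕ) (u0 : Fin s) (hk : k u0 ≠ 0) (hb : b u0 ≠ 0)
    (hlen : len q (k u0) < len q (b u0)) (m n : ℕ) (hmn : n ≤ m) :
    μs {C | (∀ i < m, ∑ u, matVec (transp (C u)) (k u) i = 0) ∧
      (∀ i < n, ∑ u, (matVec (transp (C u)) (k u) i + matVec (transp (C u)) (b u) i) = 0)}
      ≤ ((q : ℝ≥0∞)⁻¹) ^ (m + n) := by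
  classical
  haveI : Fact q.Prime := ⟨hq⟩
  set j0 := len q (k u0) with hj0
  set j1 := len q (b u0) with hj1
  let N := ∑ u, (k u + b u) + 1
  have hN : ∀ u, k u + b u < N := fun u =>
    Nat.lt_succ_of_le (Finset.single_le_sum (f := fun u => k u + b u) (fun _ _ => Nat.zero_le _)
      (Finset.mem_univ u))
  let F : Finset (Fin s × ℕ × ℕ) := Finset.univ ×ˢ Finset.range N ×ˢ Finset.range m
  let p0 : Finset (Fin s × ℕ × ℕ) := (Finset.range m).image fun i => (u0, j0, i)
  let p1 : Finset (Fin s × ℕ × ℕ) := (Finset.range n).image fun i => (u0, j1, i)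
  have hj0k : j0 ≤ k u0 := len_le_self' _ _
  have hj1b : j1 ≤ b u0 := len_le_self' _ _
  have hc : (p0 ∪ p1).card = m + n := by
    rw [Finset.card_union_of_disjoint, Finset.card_image_of_injective,
      Finset.card_image_of_injective, Finset.card_range, Finset.card_range]
    · intro a b h; simpa using h
    · intro a b h; simpa using h
    · rw [Finset.disjoint_left]
      intro x hx hx'
      simp only [p0, p1, Finset.mem_image] at hx hx'
      obtain ⟨a, _, rfl⟩ := hx
      obtain ⟨c, _, h⟩ := hx'
      simp only [Prod.mk.injEq] at h
      omega
  rw [← hc]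
  apply card_cover_bound hq μs hμs F
  · intro x hx
    have := hN u0
    simp only [p0, p1, Finset.mem_union, Finset.mem_image, Finset.mem_range] at hx
    simp only [F, Finset.mem_product, Finset.mem_univ, Finset.mem_range, true_and]
    rcases hx with ⟨a, ha, rfl⟩ | ⟨a, ha, rfl⟩ <;> constructor <;> dsimp only <;> omega
  · intro C hC C' hC' hag
    have key : ∀ i < m, ∀ u, ∀ j < N, C u j i - C' u j i = 0 := by
      intro i hi
      let D : Fin s → ℕ → ZMod q := fun u j => C u j i - C' u j i
      have hD : ∀ u, ∀ j < N, (u, j) ≠ (u0, j0) → ((u, j) ≠ (u0, j1) ∨ n ≤ i) → D u j = 0 := by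
        intro u j hj h0 h1
        apply sub_eq_zero.2
        apply hag (u, j, i)
        simp only [F, p0, p1, Finset.mem_sdiff, Finset.mem_product, Finset.mem_univ,
          Finset.mem_range, Finset.mem_union, Finset.mem_image, true_and, not_or, not_exists,
          Prod.mk.injEq]
        refine ⟨⟨hj, hi⟩, ?_, ?_⟩
        · rintro x ⟨_, rfl, rfl, rfl⟩
          exact h0 rfl
        · rintro x ⟨hx, rfl, rfl, rfl⟩
          rcases h1 with h1 | h1
          · exact h1 rfl
          · omega
      have lin : ∀ w : Fin s → ℕ, ∑ u, matVec (transp (C u)) (w u) i = 0 →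
          ∑ u, matVec (transp (C' u)) (w u) i = 0 →
          ∑ u, ∑ j ∈ Finset.range (w u + 1), D u j * digitVec q (w u) j = 0 := by
        intro w h1 h2
        rw [← sub_zero (0 : ZMod q)]
        nth_rewrite 1 [← h1]
        rw [← h2, ← Finset.sum_sub_distrib]
        apply Finset.sum_congr rfl
        intro u _
        simp only [matVec, transp, D]
        rw [← Finset.sum_sub_distrib]
        exact Finset.sum_congr rfl fun j _ => sub_mul _ _ _
      have e0 : D u0 j0 = 0 := by
        have h := lin k (hC.1 i hi) (hC'.1 i hi)
        rw [sum_single_entry k D u0 j0 hj0k] at h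
        · exact (mul_eq_zero.1 h).resolve_right (digit_lead hq hk)
        · intro u j hj hne
          by_cases h1 : (u, j) = (u0, j1)
          · obtain ⟨rfl, rfl⟩ := Prod.mk.inj h1
            rw [digit_high hq hlen, mul_zero]
          · rw [hD u j (by have := hN u; omega) hne (Or.inl h1), zero_mul]
      have e1 : D u0 j1 = 0 := by
        by_cases hin : i < n
        · have a1 := hC.2 i hin
          have a2 := hC'.2 i hin
          rw [Finset.sum_add_distrib, hC.1 i hi, zero_add] at a1
          rw [Finset.sum_add_distrib, hC'.1 i hi, zero_add] at a2
          have h := lin b a1 a2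
          rw [sum_single_entry b D u0 j1 hj1b] at h
          · exact (mul_eq_zero.1 h).resolve_right (digit_lead hq hb)
          · intro u j hj hne
            by_cases h1 : (u, j) = (u0, j0)
            · obtain ⟨rfl, rfl⟩ := Prod.mk.inj h1
              rw [e0, zero_mul]
            · rw [hD u j (by have := hN u; omega) h1 (Or.inl hne), zero_mul]
        · apply hD u0 j1 (by have := hN u0; omega)
          · intro h
            have := (Prod.mk.inj h).2
            omega
          · right; omega
      intro u j hj
      by_cases h0 : (u, j) = (u0, j0)
      · obtain ⟨rfl, rfl⟩ := Prod.mk.inj h0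
        exact e0
      by_cases h1 : (u, j) = (u0, j1)
      · obtain ⟨rfl, rfl⟩ := Prod.mk.inj h1
        exact e1
      exact hD u j hj h0 (Or.inl h1)
    intro p hp
    simp only [F, Finset.mem_product, Finset.mem_univ, Finset.mem_range, true_and] at hp
    exact sub_eq_zero.1 (key p.2.2 hp.2 p.1 p.2.1 hp.1)

lemma summable_pi_prod (f : ℕ → ℝ) (hf : Summable f) (h0 : ∀ n, 0 ≤ f n) (s : ℕ) :
    Summable fun k : Fin s → ℕ => ∏ j, f (k j) := by
  induction s with
  | zero => exact Summable.of_finite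
  | succ s ih =>
    rw [← (Fin.consEquiv fun _ : Fin (s + 1) => ℕ).summable_iff]
    have := hf.mul_of_nonneg ih h0 (fun k => Finset.prod_nonneg fun j _ => h0 _)
    refine this.congr fun x => ?_
    simp [Fin.prod_univ_succ, Fin.consEquiv]

lemma real_bound {q s : ℕ} (hq : q.Prime) (k : Fin s → ℕ) (hk : ∀ j, 1 ≤ k j) :
    ((q : ℝ)⁻¹) ^ ((∑ u, len q (k u) - 1) + ((∑ u, len q (k u)) / 2 - 1)) ≤
      (q : ℝ) ^ (5 / 2 : ℝ) *
        ∏ j, ((q : ℝ) ^ (3 / 2 : ℝ) * (1 / (k j : ℝ) ^ (3 / 2 : ℝ))) := by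
  set R := ∑ u, len q (k u) with hR
  have hq1 : (1 : ℝ) < q := by exact_mod_cast hq.one_lt
  have hq0 : (0 : ℝ) < q := by linarith
  have hj : ∀ j, (q : ℝ) ^ (-(3 / 2 : ℝ) * (len q (k j) : ℝ)) ≤
      (q : ℝ) ^ (3 / 2 : ℝ) * (1 / (k j : ℝ) ^ (3 / 2 : ℝ)) := by
    intro j
    have hkj : (0 : ℝ) < k j := by exact_mod_cast hk j
    have h1 : (k j : ℝ) ≤ (q : ℝ) ^ ((len q (k j) : ℝ) + 1) := by
      have := (Nat.lt_pow_succ_log_self hq.one_lt (k j)).le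
      have h2 : ((len q (k j) : ℝ) + 1) = ((len q (k j) + 1 : ℕ) : ℝ) := by push_cast; rfl
      rw [h2, Real.rpow_natCast]
      exact_mod_cast this
    have h2 : (k j : ℝ) ^ (3 / 2 : ℝ) ≤ (q : ℝ) ^ (((len q (k j) : ℝ) + 1) * (3 / 2)) := by
      rw [Real.rpow_mul hq0.le]
      exact Real.rpow_le_rpow hkj.le h1 (by norm_num)
    rw [mul_one_div, le_div_iff₀ (Real.rpow_pos_of_pos hkj _)]
    calc _ ≤ (q : ℝ) ^ (-(3 / 2 : ℝ) * (len q (k j) : ℝ)) *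
          (q : ℝ) ^ (((len q (k j) : ℝ) + 1) * (3 / 2)) := by gcongr
      _ = _ := by
        rw [← Real.rpow_add hq0]
        congr 1
        ring
  have hprod : (q : ℝ) ^ (-(3 / 2 : ℝ) * (R : ℝ)) ≤
      ∏ j, ((q : ℝ) ^ (3 / 2 : ℝ) * (1 / (k j : ℝ) ^ (3 / 2 : ℝ))) := by
    rw [hR, Nat.cast_sum, Finset.mul_sum, Real.rpow_sum_of_pos hq0]
    exact Finset.prod_le_prod (fun j _ => (Real.rpow_pos_of_pos hq0 _).le) fun j _ => hj j
  calc ((q : ℝ)⁻¹) ^ ((R - 1) + (R / 2 - 1))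
      = (q : ℝ) ^ (-(((R - 1) + (R / 2 - 1) : ℕ) : ℝ)) := by
        rw [Real.rpow_neg hq0.le, Real.rpow_natCast, inv_pow]
    _ ≤ (q : ℝ) ^ ((5 / 2 : ℝ) + -(3 / 2 : ℝ) * (R : ℝ)) := by
        apply Real.rpow_le_rpow_of_exponent_le hq1.le
        have : 3 * R ≤ 2 * ((R - 1) + (R / 2 - 1)) + 5 := by omega
        have : (3 * R : ℝ) ≤ 2 * (((R - 1) + (R / 2 - 1) : ℕ) : ℝ) + 5 := by exact_mod_cast this
        linarith
    _ ≤ _ := by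
        rw [Real.rpow_add hq0]
        gcongr

/-- **Lemma 4.**  Let `P̄ ⊆ ℕ^s` and, for `(k₁,…,k_s) ∈ P̄` with `r_j = len(k_j)`, let
`β₁(k₁),…,β_s(k_s) ∈ ℕ₀` with `β_j(k_j) = 0` or `len(β_j(k_j)) > len(k_j)` for all `j`,
but not all of them zero.  Then the set `M̃` of tuples `(C₁,…,C_s)` with
`ν(C₁ᵀk⃗₁ + ⋯ + C_sᵀk⃗_s) ≤ −(r₁+⋯+r_s)` and
`ν(C₁ᵀ(k⃗₁+β⃗₁(k₁)) + ⋯ + C_sᵀ(k⃗_s+β⃗_s(k_s))) ≤ −⌊(r₁+⋯+r_s)/2⌋`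
for infinitely many `(k₁,…,k_s) ∈ P̄` is a `μ_s`-null set.
(Here `C_uᵀ(k⃗_u+β⃗_u(k_u)) = C_uᵀk⃗_u + C_uᵀβ⃗_u(k_u)`, digit vectors being added
componentwise modulo `q`.) -/
theorem measure_doubly_small_nu_infinitely_often (q s : ℕ) (hq : q.Prime) (hs : 1 ≤ s)
    (Pbar : Set (Fin s → ℕ)) (hPbar : ∀ k ∈ Pbar, ∀ j, 1 ≤ k j)
    (β : Fin s → ℕ → ℕ)
    (hβ : ∀ k ∈ Pbar, ∀ j, β j (k j) = 0 ∨ len q (k j) < len q (β j (k j)))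
    (hβ0 : ∀ k ∈ Pbar, ∃ j, β j (k j) ≠ 0)
    (μs : Measure (Fin s → ℕ → ℕ → ZMod q)) (hμs : IsUniformMatrixTupleMeasure μs) :
    μs {C : Fin s → ℕ → ℕ → ZMod q |
        {k : Fin s → ℕ | k ∈ Pbar ∧
          nuLe (fun i => ∑ u, matVec (transp (C u)) (k u) i) (∑ u, len q (k u)) ∧
          nuLe (fun i => ∑ u, (matVec (transp (C u)) (k u) i +
              matVec (transp (C u)) (β u (k u)) i)) ((∑ u, len q (k u)) / 2)}.Infinite}
      = 0 := by
  classical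
  have hq0 : (0 : ℝ) < q := by exact_mod_cast hq.pos
  let E : (Fin s → ℕ) → Set (Fin s → ℕ → ℕ → ZMod q) := fun k => {C | k ∈ Pbar ∧
          nuLe (fun i => ∑ u, matVec (transp (C u)) (k u) i) (∑ u, len q (k u)) ∧
          nuLe (fun i => ∑ u, (matVec (transp (C u)) (k u) i +
              matVec (transp (C u)) (β u (k u)) i)) ((∑ u, len q (k u)) / 2)}
  let g : (Fin s → ℕ) → ℝ := fun k => (q : ℝ) ^ (5 / 2 : ℝ) *
        ∏ j, ((q : ℝ) ^ (3 / 2 : ℝ) * (1 / (k j : ℝ) ^ (3 / 2 : ℝ)))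
  have hg0 : ∀ k, 0 ≤ g k := fun k => by
    refine mul_nonneg (Real.rpow_nonneg hq0.le _) (Finset.prod_nonneg fun j _ => ?_)
    positivity
  have hg : Summable g := by
    apply Summable.mul_left
    apply summable_pi_prod (fun n : ℕ => (q : ℝ) ^ (3 / 2 : ℝ) * (1 / (n : ℝ) ^ (3 / 2 : ℝ)))
    · exact (Real.summable_one_div_nat_rpow.2 (by norm_num)).mul_left _
    · intro n; positivity
  have hEg : ∀ k, μs (E k) ≤ ENNReal.ofReal (g k) := by
    intro k
    by_cases hk : k ∈ Pbar
    · obtain ⟨u0, hu0⟩ := hβ0 k hk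
      refine le_trans (measure_mono ?_) ((event_bound hq μs hμs k (fun u => β u (k u)) u0
        (by have := hPbar k hk u0; omega) hu0 ((hβ k hk u0).resolve_left hu0)
        (∑ u, len q (k u) - 1) ((∑ u, len q (k u)) / 2 - 1) (by omega)).trans ?_)
      · rintro C ⟨_, h1, h2⟩
        exact ⟨h1, h2⟩
      · refine le_trans (le_of_eq ?_) (ENNReal.ofReal_le_ofReal (real_bound hq k (hPbar k hk)))
        rw [ENNReal.ofReal_pow (by positivity), ENNReal.ofReal_inv_of_pos hq0,
          ENNReal.ofReal_natCast]
    · have : E k = ∅ := by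
        ext C; simp [E, hk]
      rw [this]; simp
  have hsum : ∑' k, μs (E k) ≠ ⊤ :=
    ne_top_of_le_ne_top hg.tsum_ofReal_ne_top (ENNReal.tsum_le_tsum hEg)
  have := ae_finite_setOf_mem hsum
  rw [ae_iff] at this
  exact this
end
end

section
/- Let q be a prime number, s ∈ ℕ, and let (k₁,…,k_s), (ℓ₁,…,ℓ_s) ∈ ℕ^s be tuples of positive integers that are not strongly dependent over ZMod q. Let m₁, m₂ ∈ ℕ and set M(k₁,…,k_s; m₁) = {(C₁,…,C_s) : ν(C₁ᵀk⃗₁ + ⋯ + C_sᵀk⃗_s) ≤ −m₁} and M(ℓ₁,…,ℓ_s; m₂) = {(C₁,…,C_s) : ν(C₁ᵀℓ⃗₁ + ⋯ + C_sᵀℓ⃗_s) ≤ −m₂}. Then these two events are independent with respect to μ_s: μ_s(M(k₁,…,k_s; m₁) ∩ M(ℓ₁,…,ℓ_s; m₂)) = μ_s(M(k₁,…,k_s; m₁)) · μ_s(M(ℓ₁,…,ℓ_s; m₂)) = q^{−(m₁+m₂−2)}. -/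
open MeasureTheory Filter
open scoped ENNReal

noncomputable section

theorem aux_measure {q s : ℕ} [Fact q.Prime] (μs : Measure (Fin s → ℕ → ℕ → ZMod q))
    (hμs : IsUniformMatrixTupleMeasure μs) (F : Finset (Fin s × ℕ × ℕ))
    {W : Type} [Fintype W] (φ : W → Fin s × ℕ × ℕ → ZMod q)
    (hsurj : ∀ t : W → ZMod q, ∃ x : Fin s × ℕ × ℕ → ZMod q,
      ∀ w, ∑ p ∈ F, φ w p * x p = t w) :
    μs {C | ∀ w, ∑ p ∈ F, φ w p * C p.1 p.2.1 p.2.2 = 0}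
      = ((q : ℝ≥0∞)⁻¹) ^ (Fintype.card W) := by
  classical
  let L : (F → ZMod q) →ₗ[ZMod q] (W → ZMod q) :=
    Matrix.mulVecLin (Matrix.of fun w (p : F) => φ w p.1)
  have hL : ∀ x : Fin s × ℕ × ℕ → ZMod q, ∀ w,
      L (fun p => x p.1) w = ∑ p ∈ F, φ w p * x p := by
    intro x w
    simp only [L, Matrix.mulVecLin_apply, Matrix.mulVec, dotProduct, Matrix.of_apply]
    exact Finset.sum_coe_sort F (fun p => φ w p * x p)
  have hLs : Function.Surjective L := by
    intro t
    obtain ⟨x, hx⟩ := hsurj t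
    exact ⟨fun p => x p.1, by ext w; rw [hL, hx]⟩
  have hrank := LinearMap.finrank_range_add_finrank_ker L
  rw [LinearMap.range_eq_top.2 hLs, finrank_top, Module.finrank_fintype_fun_eq_card,
    Module.finrank_fintype_fun_eq_card, Fintype.card_coe] at hrank
  have hcard : Fintype.card (LinearMap.ker L) = q ^ Module.finrank (ZMod q) (LinearMap.ker L) := by
    have := Module.card_eq_pow_finrank (K := ZMod q) (V := LinearMap.ker L)
    rwa [ZMod.card] at this
  let cyl : LinearMap.ker L → Set (Fin s → ℕ → ℕ → ZMod q) :=
    fun g => {C | ∀ p : F, C p.1.1 p.1.2.1 p.1.2.2 = g.1 p}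
  have hset : {C : Fin s → ℕ → ℕ → ZMod q | ∀ w, ∑ p ∈ F, φ w p * C p.1 p.2.1 p.2.2 = 0}
      = ⋃ g, cyl g := by
    ext C
    simp only [Set.mem_setOf_eq, Set.mem_iUnion, cyl]
    constructor
    · intro h
      refine ⟨⟨fun p => C p.1.1 p.1.2.1 p.1.2.2, ?_⟩, fun p => rfl⟩
      rw [LinearMap.mem_ker]
      ext w
      rw [hL (fun p => C p.1 p.2.1 p.2.2), h w]; rfl
    · rintro ⟨g, hg⟩ w
      rw [← hL (fun p => C p.1 p.2.1 p.2.2)]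
      have : (fun p : F => C p.1.1 p.1.2.1 p.1.2.2) = g.1 := funext hg
      rw [this, LinearMap.mem_ker.1 g.2]; rfl
  have hmeas : ∀ g, MeasurableSet (cyl g) := by
    intro g
    have : cyl g = ⋂ p : F, (fun C : Fin s → ℕ → ℕ → ZMod q => C p.1.1 p.1.2.1 p.1.2.2) ⁻¹' {g.1 p} := by
      ext C; simp [cyl]
    rw [this]
    refine MeasurableSet.iInter fun p => ?_
    have hm : Measurable (fun C : Fin s → ℕ → ℕ → ZMod q => C p.1.1 p.1.2.1 p.1.2.2) := by fun_prop
    exact hm (measurableSet_singleton _)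
  have hdisj : Pairwise (Function.onFun Disjoint cyl) := by
    intro g g' hne
    rw [Function.onFun, Set.disjoint_left]
    intro C hC hC'
    exact hne (Subtype.ext (funext fun p => (hC p).symm.trans (hC' p)))
  have hval : ∀ g, μs (cyl g) = ((q : ℝ≥0∞)⁻¹) ^ F.card := by
    intro g
    rw [← hμs.2 F (fun p => if h : p ∈ F then g.1 ⟨p, h⟩ else 0)]
    congr 1
    ext C
    simp only [cyl, Set.mem_setOf_eq]
    constructor
    · intro h p hp
      rw [dif_pos hp]; exact h ⟨p, hp⟩
    · intro h p
      have := h p.1 p.2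
      rwa [dif_pos p.2] at this
  rw [hset, measure_iUnion hdisj hmeas, tsum_fintype]
  simp only [hval, Finset.sum_const, nsmul_eq_mul, Finset.card_univ, hcard]
  have hq0 : (q : ℝ≥0∞) ≠ 0 := by exact_mod_cast (Fact.out : q.Prime).ne_zero
  rw [← hrank, pow_add, mul_comm (_ ^ Fintype.card W), ← mul_assoc, Nat.cast_pow, ← mul_pow,
    ENNReal.mul_inv_cancel hq0 (ENNReal.natCast_ne_top q), one_pow, one_mul]

theorem aux_digit_zero {q k a : ℕ} (hq : 1 < q) (h : k ≤ a) : digitVec q k a = 0 := by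
  have : k / q ^ a = 0 := Nat.div_eq_of_lt (lt_of_le_of_lt h (Nat.lt_pow_self hq))
  simp [digitVec, this]

theorem aux_digit_ne {q k : ℕ} (hq : 1 < q) (h : 1 ≤ k) : ∃ a, digitVec q k a ≠ 0 := by
  refine ⟨Nat.log q k, ?_⟩
  have h1 : k / q ^ Nat.log q k < q := by
    rw [Nat.div_lt_iff_lt_mul (by positivity), ← pow_succ']
    exact Nat.lt_pow_succ_log_self hq k
  have h2 : 0 < k / q ^ Nat.log q k :=
    Nat.div_pos (Nat.pow_log_le_self q (by omega)) (by positivity)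
  simp only [digitVec]
  rw [Nat.mod_eq_of_lt h1, Ne, ZMod.natCast_eq_zero_iff]
  exact Nat.not_dvd_of_pos_of_lt h2 h1

theorem aux_minor {q s : ℕ} [Fact q.Prime] (hs : 1 ≤ s)
    (k l : Fin s → ℕ) (hk : ∀ u, 1 ≤ k u) (hl : ∀ u, 1 ≤ l u)
    (hdep : ¬∃ c : ZMod q, c ≠ 0 ∧ ∀ u, ∀ a, digitVec q (k u) a = c * digitVec q (l u) a) :
    ∃ p r : Fin s × ℕ, digitVec q (k p.1) p.2 * digitVec q (l r.1) r.2
      - digitVec q (k r.1) r.2 * digitVec q (l p.1) p.2 ≠ 0 := by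
  by_contra hcon
  push Not at hcon
  have hq1 := (Fact.out : q.Prime).one_lt
  let u0 : Fin s := ⟨0, hs⟩
  obtain ⟨a, ha⟩ := aux_digit_ne hq1 (hk u0)
  obtain ⟨b, hb⟩ := aux_digit_ne hq1 (hl u0)
  have h1 := hcon (u0, a) (u0, b)
  simp only at h1
  have hla : digitVec q (l u0) a ≠ 0 := by
    intro h0
    rw [h0, mul_zero, sub_zero] at h1
    exact (mul_ne_zero ha hb) h1
  apply hdep
  refine ⟨digitVec q (k u0) a / digitVec q (l u0) a, div_ne_zero ha hla, fun u c => ?_⟩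
  have h2 := hcon (u0, a) (u, c)
  simp only at h2
  field_simp
  linear_combination -h2

theorem aux_matVec {q s : ℕ} (hq : 1 < q) (k : Fin s → ℕ) (J I i : ℕ) (hJ : ∀ u, k u < J)
    (hi : i < I) (x : Fin s × ℕ × ℕ → ZMod q) :
    ∑ p ∈ Finset.univ ×ˢ Finset.range J ×ˢ Finset.range I,
      (if p.2.2 = i then digitVec q (k p.1) p.2.1 else 0) * x p
      = ∑ u, ∑ j ∈ Finset.range J, digitVec q (k u) j * x (u, j, i) := by
  rw [Finset.sum_product]
  refine Finset.sum_congr rfl fun u _ => ?_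
  rw [Finset.sum_product]
  refine Finset.sum_congr rfl fun j _ => ?_
  simp [ite_mul, hi]

theorem aux_matVec' {q s : ℕ} (hq : 1 < q) (k : Fin s → ℕ) (J i : ℕ) (hJ : ∀ u, k u < J)
    (C : Fin s → ℕ → ℕ → ZMod q) :
    ∑ u, matVec (transp (C u)) (k u) i
      = ∑ u, ∑ j ∈ Finset.range J, digitVec q (k u) j * C u j i := by
  refine Finset.sum_congr rfl fun u _ => ?_
  simp only [matVec, transp]
  rw [Finset.sum_subset (Finset.range_mono (Nat.succ_le_of_lt (hJ u)))]
  · exact Finset.sum_congr rfl fun j _ => mul_comm _ _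
  · intro j _ hj
    rw [aux_digit_zero hq (by simp at hj; omega), mul_zero]

theorem aux_pair {q s : ℕ} [Fact q.Prime] (hs : 1 ≤ s)
    (k l : Fin s → ℕ) (hk : ∀ u, 1 ≤ k u) (hl : ∀ u, 1 ≤ l u)
    (hdep : ¬∃ c : ZMod q, c ≠ 0 ∧ ∀ u, ∀ a, digitVec q (k u) a = c * digitVec q (l u) a)
    (m₁ m₂ : ℕ)
    (μs : Measure (Fin s → ℕ → ℕ → ZMod q)) (hμs : IsUniformMatrixTupleMeasure μs) :
    μs ({C : Fin s → ℕ → ℕ → ZMod q |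
          nuLe (fun i => ∑ u, matVec (transp (C u)) (k u) i) m₁} ∩
        {C : Fin s → ℕ → ℕ → ZMod q |
          nuLe (fun i => ∑ u, matVec (transp (C u)) (l u) i) m₂})
      = ((q : ℝ≥0∞)⁻¹) ^ ((m₁ - 1) + (m₂ - 1)) := by
  classical
  have hq1 := (Fact.out : q.Prime).one_lt
  obtain ⟨p, r, hD⟩ := aux_minor hs k l hk hl hdep
  let J := ∑ u, k u + ∑ u, l u + 1 + p.2 + r.2
  have hkJ : ∀ u, k u < J := by
    intro u
    have := Finset.single_le_sum (f := k) (fun _ _ => Nat.zero_le _) (Finset.mem_univ u)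
    omega
  have hlJ : ∀ u, l u < J := by
    intro u
    have := Finset.single_le_sum (f := l) (fun _ _ => Nat.zero_le _) (Finset.mem_univ u)
    omega
  have hpJ : p.2 < J := by
    have : 1 ≤ k p.1 := hk _
    have := hkJ p.1
    omega
  have hrJ : r.2 < J := by omega
  let I := m₁ + m₂
  let φ : Fin (m₁ - 1) ⊕ Fin (m₂ - 1) → Fin s × ℕ × ℕ → ZMod q := fun w x =>
    Sum.elim (fun i : Fin (m₁ - 1) => if x.2.2 = (i : ℕ) then digitVec q (k x.1) x.2.1 else 0)
      (fun i : Fin (m₂ - 1) => if x.2.2 = (i : ℕ) then digitVec q (l x.1) x.2.1 else 0) w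
  have hφ1 : ∀ (i : Fin (m₁ - 1)) (x : Fin s × ℕ × ℕ → ZMod q),
      ∑ y ∈ Finset.univ ×ˢ Finset.range J ×ˢ Finset.range I, φ (Sum.inl i) y * x y
      = ∑ u, ∑ j ∈ Finset.range J, digitVec q (k u) j * x (u, j, i) := fun i x =>
    aux_matVec hq1 k J I i hkJ (by have := i.2; omega) x
  have hφ2 : ∀ (i : Fin (m₂ - 1)) (x : Fin s × ℕ × ℕ → ZMod q),
      ∑ y ∈ Finset.univ ×ˢ Finset.range J ×ˢ Finset.range I, φ (Sum.inr i) y * x y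
      = ∑ u, ∑ j ∈ Finset.range J, digitVec q (l u) j * x (u, j, i) := fun i x =>
    aux_matVec hq1 l J I i hlJ (by have := i.2; omega) x
  have key := aux_measure μs hμs (Finset.univ ×ˢ Finset.range J ×ˢ Finset.range I) φ ?_
  · rw [Fintype.card_sum, Fintype.card_fin, Fintype.card_fin] at key
    rw [← key]
    congr 1
    ext C
    simp only [Set.mem_inter_iff, Set.mem_setOf_eq, nuLe, aux_matVec' hq1 k J _ hkJ,
      aux_matVec' hq1 l J _ hlJ, Sum.forall, hφ1 _ (fun y => C y.1 y.2.1 y.2.2),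
      hφ2 _ (fun y => C y.1 y.2.1 y.2.2), Fin.forall_iff]
  · intro t
    let A : ℕ → ZMod q := fun i => if h : i < m₁ - 1 then t (Sum.inl ⟨i, h⟩) else 0
    let B : ℕ → ZMod q := fun i => if h : i < m₂ - 1 then t (Sum.inr ⟨i, h⟩) else 0
    set D := digitVec q (k p.1) p.2 * digitVec q (l r.1) r.2
      - digitVec q (k r.1) r.2 * digitVec q (l p.1) p.2 with hDdef
    let X : ℕ → ZMod q := fun i =>
      (A i * digitVec q (l r.1) r.2 - B i * digitVec q (k r.1) r.2) / D
    let Y : ℕ → ZMod q := fun i =>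
      (B i * digitVec q (k p.1) p.2 - A i * digitVec q (l p.1) p.2) / D
    let x : Fin s × ℕ × ℕ → ZMod q := fun y =>
      (if y.1 = p.1 then if y.2.1 = p.2 then X y.2.2 else 0 else 0) +
      (if y.1 = r.1 then if y.2.1 = r.2 then Y y.2.2 else 0 else 0)
    have hx : ∀ (n : Fin s → ℕ) (i : ℕ),
        ∑ u, ∑ j ∈ Finset.range J, digitVec q (n u) j * x (u, j, i)
        = digitVec q (n p.1) p.2 * X i + digitVec q (n r.1) r.2 * Y i := by
      intro n i
      have e : ∀ (z : Fin s × ℕ) (Z : ZMod q), z.2 < J →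
          ∑ u, ∑ j ∈ Finset.range J, digitVec q (n u) j *
            (if u = z.1 then if j = z.2 then Z else 0 else 0) = digitVec q (n z.1) z.2 * Z := by
        intro z Z hz
        rw [Finset.sum_eq_single z.1, Finset.sum_eq_single z.2]
        · simp
        · intro j _ hj; simp [hj]
        · intro h; exact absurd (Finset.mem_range.2 hz) h
        · intro u _ hu; simp [hu]
        · intro h; exact absurd (Finset.mem_univ _) h
      simp only [x, mul_add, Finset.sum_add_distrib]
      rw [e p _ hpJ, e r _ hrJ]
    refine ⟨x, ?_⟩
    rintro (i | i)
    · rw [hφ1, hx]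
      have hA : A i = t (Sum.inl i) := by simp [A]
      rw [← hA]
      simp only [X, Y]
      field_simp
      rw [hDdef]; ring
    · rw [hφ2, hx]
      have hB : B i = t (Sum.inr i) := by simp [B]
      rw [← hB]
      simp only [X, Y]
      field_simp
      rw [hDdef]; ring

/-- **Independence of the events from Lemma 2 for strongly independent tuples.**
If `(k₁,…,k_s)` and `(ℓ₁,…,ℓ_s)` are not strongly dependent over `ZMod q`, then the
events `M(k₁,…,k_s; m₁) = {ν(C₁ᵀk⃗₁ + ⋯ + C_sᵀk⃗_s) ≤ −m₁}` and
`M(ℓ₁,…,ℓ_s; m₂) = {ν(C₁ᵀℓ⃗₁ + ⋯ + C_sᵀℓ⃗_s) ≤ −m₂}` are independent with respect to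
`μ_s`, and `μ_s(M ∩ M') = μ_s(M)·μ_s(M') = q^{−(m₁+m₂−2)}`. -/
theorem measure_inter_nuLe_sets_eq_mul (q s : ℕ) (hq : q.Prime) (hs : 1 ≤ s)
    (k l : Fin s → ℕ) (hk : ∀ u, 1 ≤ k u) (hl : ∀ u, 1 ≤ l u)
    (hdep : ¬∃ c : ZMod q, c ≠ 0 ∧ ∀ u, ∀ a, digitVec q (k u) a = c * digitVec q (l u) a)
    (m₁ m₂ : ℕ) (hm₁ : 1 ≤ m₁) (hm₂ : 1 ≤ m₂)
    (μs : Measure (Fin s → ℕ → ℕ → ZMod q)) (hμs : IsUniformMatrixTupleMeasure μs) :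
    μs ({C : Fin s → ℕ → ℕ → ZMod q |
          nuLe (fun i => ∑ u, matVec (transp (C u)) (k u) i) m₁} ∩
        {C : Fin s → ℕ → ℕ → ZMod q |
          nuLe (fun i => ∑ u, matVec (transp (C u)) (l u) i) m₂})
      = μs {C : Fin s → ℕ → ℕ → ZMod q |
          nuLe (fun i => ∑ u, matVec (transp (C u)) (k u) i) m₁} *
        μs {C : Fin s → ℕ → ℕ → ZMod q |
          nuLe (fun i => ∑ u, matVec (transp (C u)) (l u) i) m₂} ∧
    μs ({C : Fin s → ℕ → ℕ → ZMod q |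
          nuLe (fun i => ∑ u, matVec (transp (C u)) (k u) i) m₁} ∩
        {C : Fin s → ℕ → ℕ → ZMod q |
          nuLe (fun i => ∑ u, matVec (transp (C u)) (l u) i) m₂})
      = ((q : ℝ≥0∞)⁻¹) ^ (m₁ + m₂ - 2) := by
  haveI : Fact q.Prime := ⟨hq⟩
  have h := fun a b => aux_pair hs k l hk hl hdep a b μs hμs
  have h12 := h m₁ m₂
  have h1 := h m₁ 1
  have h2 := h 1 m₂
  have e1 : ∀ n : Fin s → ℕ, {C : Fin s → ℕ → ℕ → ZMod q |
      nuLe (fun i => ∑ u, matVec (transp (C u)) (n u) i) 1} = Set.univ := by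
    intro n; ext C; simp [nuLe]
  rw [e1, Set.inter_univ] at h1
  rw [e1, Set.univ_inter] at h2
  refine ⟨?_, ?_⟩
  · rw [h12, h1, h2, ← pow_add]; congr 1; omega
  · rw [h12]; congr 1; omega
end
end

section
/- Let q be a prime number, s ∈ ℕ, and let S(C₁,…,C_s) = (x_n)_{n≥0} be a digital sequence over ZMod q with generating matrices C₁,…,C_s. Let m ∈ ℕ, let N ∈ ℕ with N < q^m and q-adic expansion N = N₀ + N₁q + ⋯ + N_{m−1}q^{m−1}, let k₁,…,k_s ∈ {0,…,q^m−1}, not all zero, and set b⃗ = (b₀,b₁,b₂,…)ᵀ = Σ_{j=1}^s C_jᵀ k⃗_j ∈ (ZMod q)^ℕ. Then Σ_{n=0}^{N−1} Π_{j=1}^s wal_{k_j}(C_j n⃗) = G(N, b⃗), where, with w the least index such that b_w ≠ 0: G(N, b⃗) = ω_q^{b_{w+1}N_{w+1} + ⋯ + b_{m−1}N_{m−1}} · q^w · ( (ω_q^{b_w N_w} − 1)/(ω_q^{b_w} − 1) + ω_q^{b_w N_w}·{N/q^w} ) if w < m, and G(N, b⃗) = N if w ≥ m or b⃗ = 0⃗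 (here {·} denotes the fractional part). -/
open MeasureTheory Filter
open scoped ENNReal

noncomputable section

open Classical in
/-- `G(N, b⃗)`, where `b⃗ = (b₀, b₁, …)` and `w` is the least index with `b_w ≠ 0`:
`G(N,b⃗) = ω_q^{b_{w+1}N_{w+1}+⋯+b_{m−1}N_{m−1}} q^w ((ω_q^{b_w N_w}−1)/(ω_q^{b_w}−1)
+ ω_q^{b_w N_w} {N/q^w})` if `w < m`, and `G(N,b⃗) = N` if `w ≥ m` or `b⃗ = 0⃗`. -/
def Gfun (q m N : ℕ) (b : ℕ → ZMod q) : ℂ :=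
  if ∀ i < m, b i = 0 then (N : ℂ)
  else
    omega q ^ (∑ i ∈ Finset.Ico (sInf {i | b i ≠ 0} + 1) m, b i * digitVec q N i).val *
      (q : ℂ) ^ sInf {i | b i ≠ 0} *
      ((omega q ^ (b (sInf {i | b i ≠ 0}) * digitVec q N (sInf {i | b i ≠ 0})).val - 1) /
          (omega q ^ (b (sInf {i | b i ≠ 0})).val - 1)
        + omega q ^ (b (sInf {i | b i ≠ 0}) * digitVec q N (sInf {i | b i ≠ 0})).val *
          ((Int.fract ((N : ℝ) / (q : ℝ) ^ sInf {i | b i ≠ 0}) : ℝ) : ℂ))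

theorem aux_omega_prim {q : ℕ} (hq : q.Prime) : IsPrimitiveRoot (omega q) q :=
  Complex.isPrimitiveRoot_exp q hq.ne_zero

theorem aux_e_add {q : ℕ} (hq : q.Prime) (x y : ZMod q) :
    omega q ^ (x + y).val = omega q ^ x.val * omega q ^ y.val := by
  have : NeZero q := ⟨hq.ne_zero⟩
  rw [ZMod.val_add, ← pow_add]
  exact (pow_eq_pow_mod _ (aux_omega_prim hq).pow_eq_one).symm

theorem aux_e_sum {q : ℕ} (hq : q.Prime) {ι : Type*} (s : Finset ι) (f : ι → ZMod q) :
    omega q ^ (∑ i ∈ s, f i).val = ∏ i ∈ s, omega q ^ (f i).val := by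
  classical
  induction s using Finset.induction_on with
  | empty => simp
  | insert a s ha ih => rw [Finset.sum_insert ha, Finset.prod_insert ha, aux_e_add hq, ih]

theorem aux_e_mul {q : ℕ} (hq : q.Prime) (x : ZMod q) (c : ℕ) :
    omega q ^ (x * (c : ZMod q)).val = (omega q ^ x.val) ^ c := by
  induction c with
  | zero => simp
  | succ c ih => rw [Nat.cast_succ, mul_add, mul_one, aux_e_add hq, ih, pow_succ]

theorem aux_e_ne {q : ℕ} (hq : q.Prime) (x : ZMod q) (hx : x ≠ 0) :
    omega q ^ x.val ≠ 1 := by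
  have : NeZero q := ⟨hq.ne_zero⟩
  intro h
  have h1 := (aux_omega_prim hq).dvd_of_pow_eq_one _ h
  have h2 := Nat.eq_zero_of_dvd_of_lt h1 (ZMod.val_lt x)
  exact hx ((ZMod.val_eq_zero x).1 h2)

theorem aux_divmod_succ (n Q : ℕ) (hQ : 0 < Q) :
    (n % Q + 1 < Q ∧ (n + 1) / Q = n / Q ∧ (n + 1) % Q = n % Q + 1) ∨
    (n % Q + 1 = Q ∧ (n + 1) / Q = n / Q + 1 ∧ (n + 1) % Q = 0) := by
  have h := Nat.mod_lt n hQ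
  have hd := Nat.div_add_mod n Q
  rcases Nat.lt_or_ge (n % Q + 1) Q with h1 | h1
  · left
    refine ⟨h1, ?_⟩
    have := (Nat.div_mod_unique (a := n + 1) (d := n / Q) (c := n % Q + 1) hQ).2 ⟨by omega, h1⟩
    exact this
  · right
    have h2 : n % Q + 1 = Q := by omega
    refine ⟨h2, ?_⟩
    have := (Nat.div_mod_unique (a := n + 1) (d := n / Q + 1) (c := 0) hQ).2
      ⟨by rw [mul_add]; omega, hQ⟩
    exact this

theorem aux_L1 (h : ℕ → ℂ) (Q : ℕ) (hQ : 0 < Q) (N : ℕ) :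
    ∑ n ∈ Finset.range N, h (n / Q)
      = Q * ∑ t ∈ Finset.range (N / Q), h t + (N % Q : ℕ) * h (N / Q) := by
  induction N with
  | zero => simp
  | succ N ih =>
    rw [Finset.sum_range_succ, ih]
    rcases aux_divmod_succ N Q hQ with ⟨_, h2, h3⟩ | ⟨h1, h2, h3⟩
    · rw [h2, h3]; push_cast; ring
    · rw [h2, h3, Finset.sum_range_succ]
      have : (Q : ℂ) = (N % Q : ℕ) + 1 := by exact_mod_cast h1.symm
      rw [this]; push_cast; ring

theorem aux_L2 (g : ℕ → ℂ) (z : ℂ) (q : ℕ) (hq : 0 < q) (hz : z ^ q = 1) (hz1 : z ≠ 1) (T : ℕ) :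
    ∑ t ∈ Finset.range T, g (t / q) * z ^ (t % q)
      = g (T / q) * ((z ^ (T % q) - 1) / (z - 1)) := by
  have hz2 : z - 1 ≠ 0 := sub_ne_zero.2 hz1
  induction T with
  | zero => simp
  | succ T ih =>
    rw [Finset.sum_range_succ, ih]
    rcases aux_divmod_succ T q hq with ⟨_, h2, h3⟩ | ⟨h1, h2, h3⟩
    · rw [h2, h3]; field_simp; ring
    · rw [h2, h3]
      have : z ^ (T % q) * z = 1 := by rw [← pow_succ, h1, hz]
      have h4 : (z ^ (T % q) - 1) / (z - 1) + z ^ (T % q) = 0 := by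
        field_simp
        linear_combination this
      rw [← mul_add, h4]; simp

theorem aux_digit_zero_s12 {q n i : ℕ} (h : n < q ^ i) : digitVec q n i = 0 := by
  simp [digitVec, Nat.div_eq_of_lt h]

theorem aux_sum_digit {q : ℕ} (hq : q.Prime) (f : ℕ → ZMod q) (n m : ℕ) (hn : n < q ^ m) :
    ∑ l ∈ Finset.range (n + 1), f l * digitVec q n l
      = ∑ l ∈ Finset.range m, f l * digitVec q n l := by
  have key2 : ∀ a b, a ≤ b → n < q ^ a → ∑ l ∈ Finset.range a, f l * digitVec q n l
      = ∑ l ∈ Finset.range b, f l * digitVec q n l := by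
    intro a b hab ha
    apply Finset.sum_subset
    · intro x; simp only [Finset.mem_range]; omega
    · intro x _ hx
      simp only [Finset.mem_range, not_lt] at hx
      rw [aux_digit_zero_s12 (ha.trans_le (Nat.pow_le_pow_right hq.pos hx)), mul_zero]
  have h1 : n < q ^ (n + 1) :=
    (Nat.lt_succ_self n).trans (Nat.lt_pow_self hq.one_lt)
  rw [key2 (n + 1) (n + 1 + m) (by omega) h1, key2 m (n + 1 + m) (by omega) hn]

theorem aux_prod {q s : ℕ} (hq : q.Prime) (C : Fin s → ℕ → ℕ → ZMod q) (m n : ℕ)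
    (hn : n < q ^ m) (k : Fin s → ℕ) :
    ∏ j, wal q (k j) (matVec (C j) n)
      = omega q ^ (∑ l ∈ Finset.range m,
          (∑ j, matVec (transp (C j)) (k j) l) * digitVec q n l).val := by
  unfold wal
  rw [← aux_e_sum hq]
  congr 2
  rw [← aux_sum_digit hq _ n m hn]
  simp only [matVec, transp, Finset.sum_mul, Finset.mul_sum]
  rw [Finset.sum_comm]
  refine Finset.sum_congr rfl fun j _ => ?_
  rw [Finset.sum_comm]
  refine Finset.sum_congr rfl fun l _ => Finset.sum_congr rfl fun i _ => ?_
  ring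

theorem aux_main {q : ℕ} (hq : q.Prime) (b : ℕ → ZMod q) (m N : ℕ) :
    ∑ n ∈ Finset.range N, omega q ^ (∑ l ∈ Finset.range m, b l * digitVec q n l).val
      = Gfun q m N b := by
  unfold Gfun
  split_ifs with h0
  · rw [Finset.sum_congr rfl (g := fun _ => (1 : ℂ))]
    · simp
    · intro n _
      rw [Finset.sum_eq_zero]
      · simp
      · intro l hl
        rw [h0 l (Finset.mem_range.1 hl), zero_mul]
  · push Not at h0
    obtain ⟨i, him, hi⟩ := h0
    set w := sInf {i | b i ≠ 0} with hw
    have hbw : b w ≠ 0 := Nat.sInf_mem (s := {i | b i ≠ 0}) ⟨i, hi⟩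
    have hwm : w < m := lt_of_le_of_lt (Nat.sInf_le (s := {i | b i ≠ 0}) hi) him
    have hlow : ∀ l < w, b l = 0 := fun l hl => by
      by_contra hc
      exact absurd (Nat.sInf_le (s := {i | b i ≠ 0}) hc) (not_le.2 hl)
    set z := omega q ^ (b w).val with hz
    have hzq : z ^ q = 1 := by
      rw [hz, ← pow_mul, mul_comm, pow_mul, (aux_omega_prim hq).pow_eq_one, one_pow]
    have hz1 : z ≠ 1 := aux_e_ne hq _ hbw
    let g : ℕ → ℂ := fun u => omega q ^ (∑ l ∈ Finset.Ico (w + 1) m,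
      b l * ((u / q ^ (l - (w + 1)) % q : ℕ) : ZMod q)).val
    have hg : ∀ n, g (n / q ^ w / q)
        = omega q ^ (∑ l ∈ Finset.Ico (w + 1) m, b l * digitVec q n l).val := by
      intro n
      simp only [g]
      congr 2
      refine Finset.sum_congr rfl fun l hl => ?_
      have hl' := (Finset.mem_Ico.1 hl).1
      rw [digitVec, Nat.div_div_eq_div_mul, Nat.div_div_eq_div_mul, ← mul_assoc, ← pow_succ, ← pow_add,
        Nat.add_sub_cancel' hl']
    have hd : ∀ n, omega q ^ (b w * digitVec q n w).val = z ^ (n / q ^ w % q) := by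
      intro n
      rw [digitVec, aux_e_mul hq]
    have hF : ∀ n, omega q ^ (∑ l ∈ Finset.range m, b l * digitVec q n l).val
        = g (n / q ^ w / q) * z ^ (n / q ^ w % q) := by
      intro n
      rw [hg, ← hd, ← aux_e_add hq, Finset.range_eq_Ico,
        ← Finset.sum_Ico_consecutive _ (Nat.zero_le w) hwm.le,
        Finset.sum_eq_sum_Ico_succ_bot hwm, Finset.sum_eq_zero, zero_add, add_comm]
      intro l hl
      rw [hlow l (Finset.mem_Ico.1 hl).2, zero_mul]
    have hQ : 0 < q ^ w := pow_pos hq.pos w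
    have hQc : (q : ℂ) ^ w ≠ 0 := pow_ne_zero _ (Nat.cast_ne_zero.2 hq.ne_zero)
    have hfr : (q : ℂ) ^ w * ((Int.fract ((N : ℝ) / (q : ℝ) ^ w) : ℝ) : ℂ)
        = ((N % q ^ w : ℕ) : ℂ) := by
      have h5 : Int.fract ((N : ℝ) / (q : ℝ) ^ w) = ((N % q ^ w : ℕ) : ℝ) / ((q ^ w : ℕ) : ℝ) := by
        rw [← Int.fract_div_natCast_eq_div_natCast_mod, Nat.cast_pow]
      rw [h5, Complex.ofReal_div, Complex.ofReal_natCast, Complex.ofReal_natCast, Nat.cast_pow]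
      exact mul_div_cancel₀ _ hQc
    simp only [hF]
    rw [aux_L1 (fun t => g (t / q) * z ^ (t % q)) _ hQ, aux_L2 g z q hq.pos hzq hz1, ← hg, hd,
      ← hfr]
    push_cast
    ring

/-- **The Walsh exponential sum of a digital sequence.**  For `N < q^m` and
`k₁, …, k_s < q^m` not all zero,
`Σ_{n=0}^{N−1} Π_{j=1}^s wal_{k_j}(C_j n⃗) = G(N, b⃗)` with
`b⃗ = C₁ᵀk⃗₁ + ⋯ + C_sᵀk⃗_s`. -/
theorem walsh_sum_digital_sequence_eq_Gfun (q s : ℕ) (hq : q.Prime) (hs : 1 ≤ s)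
    (C : Fin s → ℕ → ℕ → ZMod q) (m : ℕ) (hm : 1 ≤ m)
    (N : ℕ) (hN : 1 ≤ N) (hNm : N < q ^ m)
    (k : Fin s → ℕ) (hk : ∀ j, k j < q ^ m) (hk0 : ∃ j, k j ≠ 0) :
    ∑ n ∈ Finset.range N, ∏ j, wal q (k j) (matVec (C j) n)
      = Gfun q m N (fun i => ∑ j, matVec (transp (C j)) (k j) i) := by
  rw [← aux_main hq]
  refine Finset.sum_congr rfl fun n hn => ?_
  exact aux_prod hq C m n ((Finset.mem_range.1 hn).trans hNm) k
end
end

section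
/- Let q be a prime number and s ∈ ℕ. Let P = {(k₁,…,k_s) ∈ ℕ^s : (k₁,…,k_s) ≠ (1,…,1), and for each i = 1,…,s there are a_i ∈ ℕ and 0 ≤ ℓ_i < q^{a_i−1} with k_i = q^{a_i−1} + ℓ_i} (i.e. the leading q-adic digit of each k_i equals 1). Then, writing r_i = len(k_i), the series Σ over all (k₁,…,k_s) ∈ P with r₁+⋯+r_s ≥ 2 of 1/( q^{r₁+⋯+r_s} · (r₁+⋯+r_s)^s · log(r₁+⋯+r_s) ) diverges to infinity. -/
open MeasureTheory Filter
open scoped ENNReal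

noncomputable section

theorem aux_nat_len (q r l : ℕ) (hq : 2 ≤ q) (hl : l < q ^ r) : Nat.log q (q ^ r + l) = r := by
  apply Nat.log_eq_of_pow_le_of_lt_pow
  · omega
  · rw [pow_succ]; nlinarith

theorem aux_harm (c d : ℕ) (hc : c ≠ 0) :
    ∑' j : ℕ, (((c * (d + j) : ℕ) : ℝ≥0∞))⁻¹ = ⊤ := by
  have h1 : ∀ j : ℕ, (((c * (d + j) : ℕ) : ℝ≥0∞))⁻¹ = (c : ℝ≥0∞)⁻¹ * ((d + j : ℕ) : ℝ≥0∞)⁻¹ := by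
    intro j
    rw [Nat.cast_mul, ENNReal.mul_inv]
    · left; exact_mod_cast hc
    · left; exact ENNReal.natCast_ne_top c
  simp_rw [h1]
  rw [ENNReal.tsum_mul_left]
  have h2 : ∑' j : ℕ, ((d + j + 1 : ℕ) : ℝ≥0∞)⁻¹ = ⊤ := by
    by_contra h
    have h3 : ∀ j : ℕ, ((d + j + 1 : ℕ) : ℝ≥0∞)⁻¹ = (((((j + (d + 1) : ℕ) : NNReal))⁻¹ : NNReal) : ℝ≥0∞) := by
      intro j
      rw [ENNReal.coe_inv (by positivity), ENNReal.coe_natCast]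
      congr 2; ring
    simp_rw [h3] at h
    rw [← ne_eq, ENNReal.tsum_coe_ne_top_iff_summable] at h
    have h4 := (NNReal.summable_coe.2 h)
    push_cast at h4
    have := (summable_nat_add_iff (f := fun n : ℕ => ((n : ℝ))⁻¹) (d + 1)).1 (by simpa using h4)
    exact Real.not_summable_natCast_inv this
  have h5 : ∑' j : ℕ, ((d + j : ℕ) : ℝ≥0∞)⁻¹ = ⊤ := by
    rw [eq_top_iff, ← h2]
    apply ENNReal.tsum_le_tsum
    intro j
    apply ENNReal.inv_le_inv.2
    exact Nat.cast_le.2 (Nat.le_succ _)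
  rw [h5, ENNReal.mul_top]
  simp

abbrev AuxT (q s : ℕ) : Type :=
  Σ j : ℕ, Σ m : Fin s → Fin (2 ^ (j + 1)), ∀ i : Fin s, Fin (q ^ (2 ^ (j + 1) + (m i : ℕ)))

def auxF (q s : ℕ) (x : AuxT q s) : Fin s → ℕ :=
  fun i => q ^ (2 ^ (x.1 + 1) + (x.2.1 i : ℕ)) + (x.2.2 i : ℕ)

theorem auxF_len (q s : ℕ) (hq : 2 ≤ q) (x : AuxT q s) (i : Fin s) :
    len q (auxF q s x i) = 2 ^ (x.1 + 1) + (x.2.1 i : ℕ) :=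
  aux_nat_len _ _ _ hq (x.2.2 i).2

theorem auxF_inj (q s : ℕ) (hq : 2 ≤ q) (hs : 1 ≤ s) : Function.Injective (auxF q s) := by
  intro x y h
  have hl : ∀ i, 2 ^ (x.1 + 1) + (x.2.1 i : ℕ) = 2 ^ (y.1 + 1) + (y.2.1 i : ℕ) := by
    intro i
    rw [← auxF_len q s hq, ← auxF_len q s hq, h]
  have hv : ∀ i, auxF q s x i = auxF q s y i := fun i => by rw [h]
  obtain ⟨j, m, l⟩ := x
  obtain ⟨j', m', l'⟩ := y
  simp only [auxF] at hl hv
  have hj : j = j' := by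
    have h0 := hl ⟨0, hs⟩
    have a := aux_nat_len 2 (j + 1) _ le_rfl (m ⟨0, hs⟩).2
    have b := aux_nat_len 2 (j' + 1) _ le_rfl (m' ⟨0, hs⟩).2
    rw [h0] at a
    omega
  subst hj
  have hm : m = m' := by
    ext i
    have := hl i
    omega
  subst hm
  have hll : l = l' := by
    ext i
    have := hv i
    omega
  rw [hll]

theorem auxF_mem (q s : ℕ) (hq : 2 ≤ q) (hs : 1 ≤ s) (x : AuxT q s) :
    (∀ i, ∃ a : ℕ, 1 ≤ a ∧ ∃ l : ℕ, l < q ^ (a - 1) ∧ auxF q s x i = q ^ (a - 1) + l) ∧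
        auxF q s x ≠ (fun _ => 1) ∧ 2 ≤ ∑ i, len q (auxF q s x i) := by
  have h2 : 2 ≤ ∑ i, len q (auxF q s x i) := by
    calc 2 ≤ len q (auxF q s x ⟨0, hs⟩) := by
          rw [auxF_len q s hq]
          have := Nat.one_le_two_pow (n := x.1)
          have h3 := pow_succ 2 x.1
          omega
      _ ≤ _ := Finset.single_le_sum (f := fun i => len q (auxF q s x i))
          (fun _ _ => Nat.zero_le _) (Finset.mem_univ _)
  refine ⟨fun i => ⟨2 ^ (x.1 + 1) + (x.2.1 i : ℕ) + 1, by omega, x.2.2 i, ?_, rfl⟩, ?_, h2⟩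
  · exact (x.2.2 i).2
  · intro h
    rw [h] at h2
    simp [len] at h2

theorem aux_term (q s j n : ℕ) (hq : 2 ≤ q) (h2 : 2 ≤ n) (hn : n ≤ s * 2 ^ (j + 2)) :
    (((q ^ n : ℕ) : ℝ≥0∞) * (((s * 2 ^ (j + 2)) ^ s * (s + 2 + j) : ℕ) : ℝ≥0∞))⁻¹ ≤
      (ENNReal.ofReal ((q : ℝ) ^ n * (n : ℝ) ^ s * Real.log (n : ℝ)))⁻¹ := by
  rw [ENNReal.inv_le_inv, ← Nat.cast_mul, ← ENNReal.ofReal_natCast]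
  apply ENNReal.ofReal_le_ofReal
  have hlog : Real.log (n : ℝ) ≤ s + 2 + j := by
    have hs0 : s ≠ 0 := by rintro rfl; omega
    have hs : (0 : ℝ) < s := by positivity
    calc Real.log (n : ℝ) ≤ Real.log ((s : ℝ) * 2 ^ (j + 2)) := by
          apply Real.log_le_log
          · positivity
          · exact_mod_cast hn
      _ = Real.log s + (j + 2) * Real.log 2 := by
          rw [Real.log_mul hs.ne' (by positivity), Real.log_pow]; push_cast; ring
      _ ≤ s + (j + 2) * 1 := by
          have := Real.log_le_sub_one_of_pos hs
          have h3 := Real.log_two_lt_d9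
          gcongr <;> linarith
      _ = _ := by ring
  have hn' : (n : ℝ) ≤ s * 2 ^ (j + 2) := by exact_mod_cast hn
  have : 0 ≤ Real.log (n : ℝ) := Real.log_natCast_nonneg n
  push_cast
  rw [mul_assoc]
  gcongr

/-- **Divergence of the series over `P`.**  Let
`P = {(k₁,…,k_s) ∈ ℕ^s : (k₁,…,k_s) ≠ (1,…,1), each k_i = q^{a_i−1} + ℓ_i` with
`a_i ∈ ℕ, 0 ≤ ℓ_i < q^{a_i−1}}` (i.e. the leading `q`-adic digit of each `k_i` is `1`).
Then, with `r_i = len(k_i)`, the series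
`Σ_{(k₁,…,k_s) ∈ P, r₁+⋯+r_s ≥ 2} 1/(q^{r₁+⋯+r_s} (r₁+⋯+r_s)^s log(r₁+⋯+r_s))`
diverges to infinity. -/
theorem divergence_series_over_P (q s : ℕ) (hq : q.Prime) (hs : 1 ≤ s) :
    ∑' k : {k : Fin s → ℕ //
        (∀ i, ∃ a : ℕ, 1 ≤ a ∧ ∃ l : ℕ, l < q ^ (a - 1) ∧ k i = q ^ (a - 1) + l) ∧
        k ≠ (fun _ => 1) ∧ 2 ≤ ∑ i, len q (k i)},
      (ENNReal.ofReal ((q : ℝ) ^ (∑ i, len q ((k : Fin s → ℕ) i)) *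
          ((∑ i, len q ((k : Fin s → ℕ) i)) : ℝ) ^ s *
          Real.log ((∑ i, len q ((k : Fin s → ℕ) i)) : ℝ)))⁻¹
      = ⊤ := by
  have hq2 := hq.two_le
  let G : AuxT q s → {k : Fin s → ℕ //
        (∀ i, ∃ a : ℕ, 1 ≤ a ∧ ∃ l : ℕ, l < q ^ (a - 1) ∧ k i = q ^ (a - 1) + l) ∧
        k ≠ (fun _ => 1) ∧ 2 ≤ ∑ i, len q (k i)} := fun x => ⟨auxF q s x, auxF_mem q s hq2 hs x⟩
  have hG : Function.Injective G := by
    intro x y h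
    exact auxF_inj q s hq2 hs (congrArg Subtype.val h)
  rw [eq_top_iff]
  refine le_trans ?_ (ENNReal.tsum_comp_le_tsum_of_injective hG _)
  rw [← aux_harm ((2 * s) ^ s) (s + 2) (by positivity), ENNReal.tsum_sigma']
  apply ENNReal.tsum_le_tsum
  intro j
  rw [ENNReal.tsum_sigma']
  set D : ℕ := (s * 2 ^ (j + 2)) ^ s * (s + 2 + j) with hD
  have hD0 : D ≠ 0 := by positivity
  have key : ∀ m : Fin s → Fin (2 ^ (j + 1)), (D : ℝ≥0∞)⁻¹ ≤
      ∑' l : (∀ i : Fin s, Fin (q ^ (2 ^ (j + 1) + (m i : ℕ)))),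
        (fun k : {k : Fin s → ℕ //
        (∀ i, ∃ a : ℕ, 1 ≤ a ∧ ∃ l : ℕ, l < q ^ (a - 1) ∧ k i = q ^ (a - 1) + l) ∧
        k ≠ (fun _ => 1) ∧ 2 ≤ ∑ i, len q (k i)} =>
      (ENNReal.ofReal ((q : ℝ) ^ (∑ i, len q ((k : Fin s → ℕ) i)) *
          ((∑ i, len q ((k : Fin s → ℕ) i)) : ℝ) ^ s *
          Real.log ((∑ i, len q ((k : Fin s → ℕ) i)) : ℝ)))⁻¹) (G ⟨j, m, l⟩) := by
    intro m
    set n := ∑ i, (2 ^ (j + 1) + (m i : ℕ)) with hn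
    have hlen : ∀ l, ∑ i, len q (auxF q s ⟨j, m, l⟩ i) = n := by
      intro l
      exact Finset.sum_congr rfl fun i _ => auxF_len q s hq2 ⟨j, m, l⟩ i
    have hnle : n ≤ s * 2 ^ (j + 2) := by
      calc n ≤ ∑ i : Fin s, 2 ^ (j + 2) := by
            apply Finset.sum_le_sum
            intro i _
            have := (m i).2
            rw [pow_succ 2 (j + 1)]
            omega
        _ = _ := by simp
    have hle : ∑' l : (∀ i : Fin s, Fin (q ^ (2 ^ (j + 1) + (m i : ℕ)))),
        (((q ^ n : ℕ) : ℝ≥0∞) * (D : ℝ≥0∞))⁻¹ = (D : ℝ≥0∞)⁻¹ := by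
      rw [tsum_fintype, Finset.sum_const, Finset.card_univ, Fintype.card_pi]
      simp only [Fintype.card_fin]
      rw [Finset.prod_pow_eq_pow_sum, ← hn, nsmul_eq_mul, ENNReal.mul_inv, ← mul_assoc,
        ENNReal.mul_inv_cancel, one_mul]
      · have : q ^ n ≠ 0 := by positivity
        exact_mod_cast this
      · exact ENNReal.natCast_ne_top _
      · right; exact ENNReal.natCast_ne_top _
      · left; exact ENNReal.natCast_ne_top _
    rw [← hle]
    apply ENNReal.tsum_le_tsum
    intro l
    have h2 := (auxF_mem q s hq2 hs ⟨j, m, l⟩).2.2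
    have := aux_term q s j n hq2 (by rw [← hlen l]; exact h2) hnle
    simp only [G]
    rw [← Nat.cast_sum, hlen l]
    exact this
  refine le_trans ?_ (ENNReal.tsum_le_tsum key)
  rw [tsum_fintype, Finset.sum_const, Finset.card_univ, Fintype.card_pi]
  simp only [Fintype.card_fin, Finset.prod_const, Finset.card_univ]
  have hDe : D = (2 ^ (j + 1)) ^ s * ((2 * s) ^ s * (s + 2 + j)) := by
    rw [hD, ← mul_assoc, ← mul_pow]; ring
  rw [hDe, nsmul_eq_mul, Nat.cast_mul ((2 ^ (j + 1)) ^ s), ENNReal.mul_inv, ← mul_assoc,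
    ENNReal.mul_inv_cancel, one_mul]
  · have : (2 ^ (j + 1)) ^ s ≠ 0 := by positivity
    exact_mod_cast this
  · exact ENNReal.natCast_ne_top _
  · right; exact ENNReal.natCast_ne_top _
  · left; exact ENNReal.natCast_ne_top _
end
end
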